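/- Fix a > 0 and n ∈ ℕ. The set {φ^{♯n} : φ ∈ L²([0,a))} ⊆ L²([0,na)) is gap-rich with empty exceptional set; equivalently, the map (φ,E) ↦ B(φ^{♯n},E) = B(φ,E)^n, extended multiplicatively to words, is gap-rich with empty exceptional set. -/

import Mathlib

open Set MeasureTheory BoundedContinuousFunction

noncomputable section

/-- `L²(ℝ)`. -/
abbrev L2R := Lp ℝ 2 (volume : Measure ℝ)

/-- `L²([0,a))`. -/
abbrev L2I (a : ℝ) := Lp ℝ 2 (volume.restrict (Ico (0 : ℝ) a))

/-- `g` and `h` satisfy `(-d²/dx² + (V - E)) g = h` in the distributional sense. -/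
def WeakSchrodingerEq (V : ℝ → ℝ) (E : ℝ) (g h : L2R) : Prop :=
  ∀ φ : ℝ → ℝ, ContDiff ℝ (⊤ : ℕ∞) φ → HasCompactSupport φ →
    ∫ x, g x * (-(deriv (deriv φ) x) + (V x - E) * φ x) = ∫ x, h x * φ x

/-- The spectrum of the continuum Schrödinger operator `L_V = -d²/dx² + V` on
`L²(ℝ)`: `E` is in the spectrum iff there is no bounded operator `T` inverting
`L_V - E` (in the distributional sense). -/
def ContSpectrum (V : ℝ → ℝ) : Set ℝ :=
  {E : ℝ | ¬ ∃ T : L2R →L[ℝ] L2R,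
      (∀ f : L2R, WeakSchrodingerEq V E (T f) f) ∧
      (∀ g h : L2R, WeakSchrodingerEq V E g h → T h = g)}

/-- A subset of ℝ is discrete if it has no accumulation points. -/
def IsDiscreteSet (S : Set ℝ) : Prop := ∀ x : ℝ, ¬ AccPt x (Filter.principal S)

/-- Periodic extension `w^{♯ℤ}` of a finite word `w`. -/
def perExt {α : Type*} [Zero α] {m : ℕ} (w : Fin m → α) : ℤ → α :=
  fun n =>
    if h : 0 < m then
      w ⟨(n % (m : ℤ)).toNat, by
        have h1 : 0 ≤ n % (m : ℤ) := Int.emod_nonneg n (by exact_mod_cast h.ne')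
        have h2 : n % (m : ℤ) < (m : ℤ) := Int.emod_lt_of_pos n (by exact_mod_cast h)
        omega⟩
    else 0

/-- Concatenation `y^♮ : ℝ → ℝ` of a bi-infinite sequence of pieces in
`L²([0,a))`: `y^♮(ja + t) = y_j(t)` for `t ∈ [0,a)`. -/
def aggC (a : ℝ) (y : ℤ → L2I a) : ℝ → ℝ :=
  fun t => (y ⌊t / a⌋) (t - (⌊t / a⌋ : ℝ) * a)

/-- `Y ⊆ L²([0,a))` is gap-rich with exceptional set `S`. -/
def GapRichC (a : ℝ) (Y : Set (L2I a)) (S : Set ℝ) : Prop :=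
  IsDiscreteSet S ∧
  ∀ E : ℝ, E ∉ S → ∀ m : ℕ, 0 < m → ∀ x : Fin m → L2I a, (∀ i, x i ∈ Y) →
    ∀ ε : ℝ, 0 < ε →
      ∃ l : ℕ, 0 < l ∧ ∃ y : Fin l → L2I a,
        (∀ i, y i ∈ Y) ∧
        (∀ j : ℤ, dist (perExt x j) (perExt y j) < ε) ∧
        E ∉ ContSpectrum (aggC a (perExt y))

/-- The periodic elements of `Y^ℤ`. -/
def PerC (a : ℝ) (Y : Set (L2I a)) : Set (ℤ →ᵇ L2I a) :=
  {x | (∃ q : ℕ, 0 < q ∧ ∀ n : ℤ, x (n + q) = x n) ∧ ∀ n : ℤ, x n ∈ Y}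

/-- The limit-periodic elements of `Y^ℤ`. -/
def LPC (a : ℝ) (Y : Set (L2I a)) : Set (ℤ →ᵇ L2I a) := closure (PerC a Y)

/-- Cantor set of zero Hausdorff dimension (continuum case: closed, possibly
unbounded). -/
def IsZeroDimCantorC (s : Set ℝ) : Prop :=
  s.Nonempty ∧ IsClosed s ∧ Preperfect s ∧ interior s = ∅ ∧ dimH s = 0

/-- The set of `n`-fold self-concatenations `{φ^{♯n} : φ ∈ L²([0,a))} ⊆ L²([0,na))`,
described by its almost-everywhere values: there is `φ ∈ L²([0,a))` such that on
each block `[ja, (j+1)a)`, `0 ≤ j < n`, the element agrees with `φ(· - ja)`. -/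
def repeatSet (a : ℝ) (n : ℕ) : Set (L2I (n * a)) :=
  {χ | ∃ φ : L2I a, ∀ j : ℕ, j < n →
    (∀ᵐ t ∂(volume.restrict (Ico (0 : ℝ) a)), χ (t + j * a) = φ t)}

/-!
The word can be perturbed to a periodic potential whose monodromy at energy `E` is hyperbolic, and
hyperbolic monodromy puts `E` in the resolvent set.

*Hyperbolicity.* By density the letters may be taken smooth with compact support in `(0, a)`. If
`c, s` are the standard solutions of `u'' = (ψ - E) u`, the potential can be changed by a uniformly
small amount so that the transfer matrix `X` becomes `X (1 + δ N)` with `N` either elementary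
nilpotent matrix and `δ` any small number (`shear_perturb`): the perturbed solutions are written
down explicitly. Hence the set `Ω` of transfer matrices of potentials near the first letter is
stable under small elementary right factors. A linear functional vanishing on `{X ^ n : X ∈ Ω}`
would, the dependence on `δ` being polynomial, vanish on all `n`-th powers of elements of
`SL(2,ℝ)`, and so be zero (`pow_spanning`). With `P` the product of the `n`-th powers of the
transfer matrices of the other letters, the set `{P X ^ n : X ∈ Ω}` is then spanning as well, and a
spanning subset of `SL(2,ℝ)` has a hyperbolic product (`exists_hyperbolic_prod`): otherwise it would
contain a noncommuting pair of elliptic matrices `A`, `B`, whose inverses are limits of their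
positive powers, while `tr (A B A⁻¹ B⁻¹) > 2`. This product is the monodromy of a perturbation of a
repetition of the given word (`exists_hyperbolic_word`). No energy is exceptional.

*Resolvent set.* Hyperbolic monodromy provides Floquet solutions `u`, `v` decaying exponentially at
`+∞` and `-∞` (`exists_dichotomy`). Variation of constants bounds `‖φ‖₂` by a multiple of
`‖-φ'' + (V - E) φ‖₂` for test functions `φ` (`coercive`), and shows that the functions
`-φ'' + (V - E) φ` are dense in `L²(ℝ)` (`denseRange_schrToL2`). The inverse therefore extends to a
bounded operator, and symmetry and density show that it inverts the operator in the distributional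
sense (`notMem_contSpectrum`).
-/

/-! ### The equation `u'' = q u` and its transfer matrices -/

/-- `(u, u')` solves the first-order system equivalent to `u'' = q u` on all of `ℝ`. -/
structure IsSol (q u u' : ℝ → ℝ) : Prop where
  d1 : ∀ x, HasDerivAt u (u' x) x
  d2 : ∀ x, HasDerivAt u' (q x * u x) x

theorem exp_abs_integral_le {lam : ℝ} (hl : 0 < lam) (x : ℝ) :
    |∫ t in (0 : ℝ)..x, Real.exp (lam * |t|)| ≤ Real.exp (lam * |x|) / lam := by
  have key : ∀ y : ℝ, 0 ≤ y →
      ∫ t in (0 : ℝ)..y, Real.exp (lam * |t|) = (Real.exp (lam * y) - 1) / lam := by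
    intro y hy
    have h1 : ∫ t in (0 : ℝ)..y, Real.exp (lam * |t|) = ∫ t in (0 : ℝ)..y, Real.exp (lam * t) := by
      apply intervalIntegral.integral_congr
      intro t ht
      rw [uIcc_of_le hy] at ht
      simp [abs_of_nonneg ht.1]
    rw [h1, intervalIntegral.integral_comp_mul_left (fun t => Real.exp t) hl.ne', integral_exp]
    simp; ring
  have bd : ∀ y : ℝ, 0 ≤ y →
      |∫ t in (0 : ℝ)..y, Real.exp (lam * |t|)| ≤ Real.exp (lam * y) / lam := by
    intro y hy
    have := Real.add_one_le_exp (lam * y)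
    have : 0 ≤ lam * y := by positivity
    rw [key y hy, abs_of_nonneg (div_nonneg (by linarith) hl.le)]
    gcongr; linarith
  rcases le_total 0 x with hx | hx
  · simpa [abs_of_nonneg hx] using bd x hx
  · have h := intervalIntegral.integral_comp_neg (a := 0) (b := -x) (fun t => Real.exp (lam * |t|))
    simp only [abs_neg, neg_zero, neg_neg] at h
    rw [intervalIntegral.integral_symm, abs_neg, ← h, abs_of_nonpos hx]
    exact bd (-x) (by linarith)

/-- Global existence for `u'' = q u` with `q` bounded and continuous. The unknown is
`exp (-lam |x|) (u, u')`, on which the Picard operator contracts the sup norm over all of `ℝ`. -/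
theorem exists_isSol (q : ℝ → ℝ) (hq : Continuous q) (K : ℝ) (hK : ∀ x, |q x| ≤ K) (c₀ c₁ : ℝ) :
    ∃ u u', IsSol q u u' ∧ u 0 = c₀ ∧ u' 0 = c₁ := by
  set K' := max K 1 with hK'
  have hK'1 : 1 ≤ K' := le_max_right _ _
  set lam := 2 * K' with hlam
  have hl : 0 < lam := by positivity
  let A : ℝ → ℝ × ℝ → ℝ × ℝ := fun t z => (z.2, q t * z.1)
  have hAc : ∀ f : ℝ → ℝ × ℝ, Continuous f → Continuous fun t => A t (f t) := by
    intro f hf; simp only [A]; fun_prop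
  have hAb : ∀ t z, ‖A t z‖ ≤ K' * ‖z‖ := by
    intro t z
    have h1 : ‖z.1‖ ≤ ‖z‖ := norm_fst_le z
    have h2 : ‖z.2‖ ≤ ‖z‖ := norm_snd_le z
    have h0 := norm_nonneg z
    refine max_le ?_ ?_
    · simp only [A]; nlinarith
    · simp only [A, norm_mul]
      have : ‖q t‖ ≤ K' := (hK t).trans (le_max_left _ _)
      gcongr
  let y0 : ℝ × ℝ := (c₀, c₁)
  let G : (ℝ → ℝ × ℝ) → ℝ → ℝ × ℝ := fun z x =>
    ∫ t in (0 : ℝ)..x, A t (Real.exp (lam * |t|) • z t)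
  have hG : ∀ (z : ℝ → ℝ × ℝ), Continuous z → ∀ C : ℝ, (∀ t, ‖z t‖ ≤ C) → ∀ x,
      ‖G z x‖ ≤ C / 2 * Real.exp (lam * |x|) := by
    intro z hz C hC x
    have hC0 : 0 ≤ C := (norm_nonneg _).trans (hC 0)
    have hci : IntervalIntegrable (fun t => K' * C * Real.exp (lam * |t|)) volume 0 x :=
      Continuous.intervalIntegrable (by fun_prop) _ _
    have h1 : ‖G z x‖ ≤ |∫ t in (0 : ℝ)..x, K' * C * Real.exp (lam * |t|)| := by
      apply intervalIntegral.norm_integral_le_abs_of_norm_le _ hci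
      refine Filter.Eventually.of_forall fun t => ?_
      refine (hAb _ _).trans ?_
      rw [norm_smul, Real.norm_eq_abs, Real.abs_exp]
      have := hC t
      have : Real.exp (lam * |t|) * ‖z t‖ ≤ Real.exp (lam * |t|) * C := by gcongr
      nlinarith
    refine h1.trans ?_
    rw [intervalIntegral.integral_const_mul, abs_mul, abs_of_nonneg (by positivity)]
    have := exp_abs_integral_le hl x
    calc K' * C * |∫ t in (0 : ℝ)..x, Real.exp (lam * |t|)|
        ≤ K' * C * (Real.exp (lam * |x|) / lam) := by gcongr
      _ = C / 2 * Real.exp (lam * |x|) := by rw [hlam]; field_simp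
  have hGc : ∀ (z : ℝ → ℝ × ℝ), Continuous z → Continuous (G z) := by
    intro z hz
    exact intervalIntegral.continuous_primitive
      (fun a b => (hAc _ (by fun_prop)).intervalIntegrable _ _) 0
  let F : (ℝ →ᵇ ℝ × ℝ) → (ℝ →ᵇ ℝ × ℝ) := fun z =>
    BoundedContinuousFunction.ofNormedAddCommGroup
      (fun x => Real.exp (-(lam * |x|)) • (y0 + G z x))
      (by have := hGc z z.continuous; fun_prop) (‖y0‖ + ‖z‖ / 2) (by
        intro x
        rw [norm_smul, Real.norm_eq_abs, Real.abs_exp]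
        have h1 := hG z z.continuous ‖z‖ z.norm_coe_le_norm x
        have h2 : Real.exp (-(lam * |x|)) ≤ 1 := by
          rw [Real.exp_le_one_iff]; have := abs_nonneg x; nlinarith
        have h3 : Real.exp (-(lam * |x|)) * Real.exp (lam * |x|) = 1 := by
          rw [← Real.exp_add]; simp
        calc Real.exp (-(lam * |x|)) * ‖y0 + G z x‖
            ≤ Real.exp (-(lam * |x|)) * (‖y0‖ + ‖z‖ / 2 * Real.exp (lam * |x|)) := by
              gcongr; exact (norm_add_le _ _).trans (by gcongr)
          _ = Real.exp (-(lam * |x|)) * ‖y0‖ + ‖z‖ / 2 *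
                (Real.exp (-(lam * |x|)) * Real.exp (lam * |x|)) := by ring
          _ ≤ 1 * ‖y0‖ + ‖z‖ / 2 * 1 := by rw [h3]; gcongr
          _ = _ := by ring)
  have hF : ContractingWith (1 / 2) F := by
    refine ⟨by rw [div_lt_one] <;> norm_num, LipschitzWith.of_dist_le_mul fun z w => ?_⟩
    rw [BoundedContinuousFunction.dist_le (by positivity)]
    intro x
    have hsub : G z x - G w x = G (z - w : ℝ →ᵇ ℝ × ℝ) x := by
      simp only [G]
      rw [← intervalIntegral.integral_sub]
      · congr 1; ext t <;> simp [A] <;> ring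
      · exact (hAc _ (by fun_prop)).intervalIntegrable _ _
      · exact (hAc _ (by fun_prop)).intervalIntegrable _ _
    have h1 := hG (z - w : ℝ →ᵇ ℝ × ℝ) (z - w).continuous ‖z - w‖ (z - w).norm_coe_le_norm x
    have h3 : Real.exp (-(lam * |x|)) * Real.exp (lam * |x|) = 1 := by
      rw [← Real.exp_add]; simp
    have h2 : dist (F z x) (F w x) = Real.exp (-(lam * |x|)) * ‖G z x - G w x‖ := by
      rw [dist_eq_norm]
      change ‖Real.exp (-(lam * |x|)) • (y0 + G z x) - Real.exp (-(lam * |x|)) • (y0 + G w x)‖ = _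
      rw [← smul_sub, norm_smul, Real.norm_eq_abs, Real.abs_exp]; congr 2; abel
    rw [h2, hsub, dist_eq_norm]
    calc _ ≤ Real.exp (-(lam * |x|)) * (‖z - w‖ / 2 * Real.exp (lam * |x|)) := by gcongr
      _ = ‖z - w‖ / 2 * (Real.exp (-(lam * |x|)) * Real.exp (lam * |x|)) := by ring
      _ = ((1 / 2 : NNReal) : ℝ) * ‖z - w‖ := by rw [h3]; push_cast; ring
  obtain ⟨z, hz⟩ : ∃ z, F z = z := ⟨hF.fixedPoint, hF.fixedPoint_isFixedPt⟩
  let y : ℝ → ℝ × ℝ := fun x => Real.exp (lam * |x|) • z x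
  have hy : ∀ x, y x = y0 + ∫ t in (0 : ℝ)..x, A t (y t) := by
    intro x
    have h3 : Real.exp (lam * |x|) * Real.exp (-(lam * |x|)) = 1 := by
      rw [← Real.exp_add]; simp
    have : z x = Real.exp (-(lam * |x|)) • (y0 + G z x) := by
      conv_lhs => rw [← hz]
      rfl
    change Real.exp (lam * |x|) • z x = _
    rw [this, smul_smul, h3, one_smul]
  have hyc : Continuous y := by simp only [y]; fun_prop
  have hAy : Continuous fun t => A t (y t) := hAc y hyc
  have hyd : ∀ x, HasDerivAt y (A x (y x)) x := by
    intro x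
    have h1 := (intervalIntegral.integral_hasDerivAt_right (hAy.intervalIntegrable 0 x)
      (hAy.stronglyMeasurableAtFilter _ _) hAy.continuousAt).const_add y0
    exact h1.congr_of_eventuallyEq (Filter.Eventually.of_forall hy)
  have hy0 : y 0 = y0 := by rw [hy]; simp
  refine ⟨fun x => (y x).1, fun x => (y x).2, ⟨fun x => ?_, fun x => ?_⟩, by simp [hy0, y0],
    by simp [hy0, y0]⟩
  · exact (hasFDerivAt_fst.comp_hasDerivAt x (hyd x))
  · exact (hasFDerivAt_snd.comp_hasDerivAt x (hyd x))

theorem IsSol.contDiff_nat {q u u' : ℝ → ℝ} (h : IsSol q u u') (hq : ContDiff ℝ (⊤ : ℕ∞) q) (n : ℕ) :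
    ContDiff ℝ n u ∧ ContDiff ℝ n u' := by
  induction n with
  | zero =>
    simp only [Nat.cast_zero, contDiff_zero]
    exact ⟨continuous_iff_continuousAt.2 fun x => (h.d1 x).continuousAt,
      continuous_iff_continuousAt.2 fun x => (h.d2 x).continuousAt⟩
  | succ n ih =>
    have e1 : deriv u = u' := funext fun x => (h.d1 x).deriv
    have e2 : deriv u' = fun x => q x * u x := funext fun x => (h.d2 x).deriv
    push_cast
    rw [contDiff_succ_iff_deriv, contDiff_succ_iff_deriv, e1, e2]
    refine ⟨⟨fun x => (h.d1 x).differentiableAt, by simp, ih.2⟩,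
      fun x => (h.d2 x).differentiableAt, by simp, ?_⟩
    exact (hq.of_le (by exact_mod_cast le_top)).mul ih.1

theorem IsSol.contDiff {q u u' : ℝ → ℝ} (h : IsSol q u u') (hq : ContDiff ℝ (⊤ : ℕ∞) q) :
    ContDiff ℝ (⊤ : ℕ∞) u :=
  contDiff_infty.2 fun n => (h.contDiff_nat hq n).1

theorem IsSol.contDiff' {q u u' : ℝ → ℝ} (h : IsSol q u u') (hq : ContDiff ℝ (⊤ : ℕ∞) q) :
    ContDiff ℝ (⊤ : ℕ∞) u' :=
  contDiff_infty.2 fun n => (h.contDiff_nat hq n).2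

theorem IsSol.add_smul {q u u' v v' : ℝ → ℝ} (h : IsSol q u u') (k : IsSol q v v') (α β : ℝ) :
    IsSol q (fun x => α * u x + β * v x) (fun x => α * u' x + β * v' x) :=
  ⟨fun x => ((h.d1 x).const_mul α).add ((k.d1 x).const_mul β),
   fun x => (((h.d2 x).const_mul α).add ((k.d2 x).const_mul β)).congr_deriv (by ring)⟩

/-- The Wronskian is constant on an interval where the two (shifted) potentials agree. -/
theorem wronskian_const {p q u u' v v' : ℝ → ℝ} (h : IsSol p u u') (k : IsSol q v v')
    (x₀ a : ℝ) (ha : 0 ≤ a) (hpq : ∀ t ∈ Icc 0 a, p (x₀ + t) = q t) :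
    u (x₀ + a) * v' a - u' (x₀ + a) * v a = u x₀ * v' 0 - u' x₀ * v 0 := by
  have hd : ∀ t, HasDerivAt (fun t => u (x₀ + t) * v' t - u' (x₀ + t) * v t)
      (u (x₀ + t) * v t * (q t - p (x₀ + t))) t := by
    intro t
    have h1 := (h.d1 (x₀ + t)).comp_const_add x₀ t
    have h2 := (h.d2 (x₀ + t)).comp_const_add x₀ t
    exact ((h1.mul (k.d2 t)).sub (h2.mul (k.d1 t))).congr_deriv (by ring)
  have := constant_of_has_deriv_right_zero (a := 0) (b := a)
    (f := fun t => u (x₀ + t) * v' t - u' (x₀ + t) * v t)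
    (fun t _ => (hd t).continuousAt.continuousWithinAt)
    (fun t ht => by
      have := hd t
      rw [hpq t ⟨ht.1, ht.2.le⟩, sub_self, mul_zero] at this
      exact this.hasDerivWithinAt) a ⟨ha, le_rfl⟩
  simpa using this

theorem wronskian_const_univ {q u u' v v' : ℝ → ℝ} (h : IsSol q u u') (k : IsSol q v v') (x : ℝ) :
    u x * v' x - u' x * v x = u 0 * v' 0 - u' 0 * v 0 := by
  have hd : ∀ t, HasDerivAt (fun t => u t * v' t - u' t * v t) 0 t := fun t =>
    (((h.d1 t).mul (k.d2 t)).sub ((h.d2 t).mul (k.d1 t))).congr_deriv (by ring)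
  exact is_const_of_deriv_eq_zero (fun t => (hd t).differentiableAt) (fun t => (hd t).deriv) x 0

/-- `B` is the transfer matrix across `[0,a]` of the equation `u'' = q u`. -/
def IsTransfer (q : ℝ → ℝ) (a : ℝ) (B : Matrix (Fin 2) (Fin 2) ℝ) : Prop :=
  ∃ c c' s s' : ℝ → ℝ, IsSol q c c' ∧ IsSol q s s' ∧ c 0 = 1 ∧ c' 0 = 0 ∧ s 0 = 0 ∧ s' 0 = 1 ∧
    B = !![c a, s a; c' a, s' a]

theorem IsTransfer.det {q : ℝ → ℝ} {a : ℝ} {B : Matrix (Fin 2) (Fin 2) ℝ} (h : IsTransfer q a B) :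
    B.det = 1 := by
  obtain ⟨c, c', s, s', hc, hs, h1, h2, h3, h4, rfl⟩ := h
  have := wronskian_const_univ hc hs a
  rw [h1, h2, h3, h4] at this
  rw [Matrix.det_fin_two_of]; linarith

theorem exists_isTransfer (q : ℝ → ℝ) (hq : Continuous q) (K : ℝ) (hK : ∀ x, |q x| ≤ K) (a : ℝ) :
    ∃ B, IsTransfer q a B := by
  obtain ⟨c, c', hc, h1, h2⟩ := exists_isSol q hq K hK 1 0
  obtain ⟨s, s', hs, h3, h4⟩ := exists_isSol q hq K hK 0 1
  exact ⟨_, c, c', s, s', hc, hs, h1, h2, h3, h4, rfl⟩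

/-- The transfer matrix of `q` propagates solutions of `u'' = p u` across any interval `[x₀, x₀ + a]`
on which `p` is the translate of `q`. The proof solves the two Wronskian identities for the data at
`x₀ + a`, so no uniqueness theorem is needed. -/
theorem IsTransfer.apply {p q u u' : ℝ → ℝ} {a x₀ : ℝ} {B : Matrix (Fin 2) (Fin 2) ℝ}
    (hB : IsTransfer q a B) (h : IsSol p u u') (ha : 0 ≤ a)
    (hpq : ∀ t ∈ Icc 0 a, p (x₀ + t) = q t) :
    u (x₀ + a) = B 0 0 * u x₀ + B 0 1 * u' x₀ ∧ u' (x₀ + a) = B 1 0 * u x₀ + B 1 1 * u' x₀ := by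
  have hdet := hB.det
  obtain ⟨c, c', s, s', hc, hs, h1, h2, h3, h4, rfl⟩ := hB
  have e1 := wronskian_const h hc x₀ a ha hpq
  have e2 := wronskian_const h hs x₀ a ha hpq
  rw [Matrix.det_fin_two_of] at hdet
  rw [h1, h2] at e1
  rw [h3, h4] at e2
  simp only [Matrix.of_apply, Matrix.cons_val', Matrix.cons_val_zero, Matrix.cons_val_one,
    Matrix.cons_val_fin_one]
  constructor
  · linear_combination c a * e2 - s a * e1 - u (x₀ + a) * hdet
  · linear_combination c' a * e2 - s' a * e1 - u' (x₀ + a) * hdet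

/-! ### Hyperbolic products in `SL(2,ℝ)` -/

/-- Real `2 × 2` matrices. -/
abbrev Mat2 := Matrix (Fin 2) (Fin 2) ℝ

theorem det_sub_one_eq (M : Mat2) (h : M.det = 1) : (M - 1).det = 2 - M.trace := by
  rw [Matrix.det_fin_two] at h
  rw [Matrix.det_fin_two, Matrix.trace_fin_two]
  simp
  linarith

/-- With `det_sub_one_eq` this gives `tr (A B A⁻¹ B⁻¹) > 2` for an elliptic `A` not commuting with
`B ∈ SL(2,ℝ)`. -/
theorem det_commutator_neg (A B : Mat2) (hA : A.det = 1) (ht : |A.trace| < 2)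
    (hAB : A * B ≠ B * A) : (A * B - B * A).det < 0 := by
  rw [Matrix.det_fin_two] at hA
  rw [Matrix.trace_fin_two, abs_lt] at ht
  -- `D = AB - BA` is traceless and orthogonal to the traceless part of `A`, which is definite.
  obtain ⟨D, hD⟩ : ∃ D, D = A * B - B * A := ⟨_, rfl⟩
  have hD0 : D ≠ 0 := by rw [hD]; exact sub_ne_zero.2 hAB
  have e1 : D 1 1 = - D 0 0 := by
    rw [hD]; simp [Matrix.mul_apply, Fin.sum_univ_two]; ring
  have e2 : (A 0 0 - A 1 1) * D 0 0 + A 0 1 * D 1 0 + A 1 0 * D 0 1 = 0 := by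
    rw [hD]; simp [Matrix.mul_apply, Fin.sum_univ_two]; ring
  rw [← hD, Matrix.det_fin_two, e1]
  set p := A 0 0
  set q := A 0 1
  set r := A 1 0
  set s := A 1 1
  set α := D 0 0 with hα
  set β := D 0 1 with hβ
  set γ := D 1 0 with hγ
  have hdisc : (p - s) ^ 2 + 4 * (q * r) < 0 := by nlinarith
  have hqr : q * r < 0 := by nlinarith [sq_nonneg (p - s)]
  by_contra hcon
  have hcon' : α ^ 2 + β * γ ≤ 0 := by nlinarith
  -- with `Q = qγ + rβ = -(p-s)α`: `Q² ≥ 4 qr βγ ≥ -4 qr α²`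
  have h1 : ((p - s) * α) ^ 2 = (q * γ + r * β) ^ 2 := by
    have : (p - s) * α = -(q * γ + r * β) := by linarith
    rw [this]; ring
  have h2 : -(4 * (q * r)) * α ^ 2 ≤ 4 * (q * r) * (β * γ) := by nlinarith
  have h3 : ((p - s) ^ 2 + 4 * (q * r)) * α ^ 2 ≥ (q * γ - r * β) ^ 2 := by nlinarith
  have hα0 : α = 0 := by
    by_contra hne
    have : 0 < α ^ 2 := by positivity
    nlinarith [sq_nonneg (q * γ - r * β)]
  rw [hα0] at h1 h3
  have h4 : q * γ - r * β = 0 := by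
    have : (q * γ - r * β) ^ 2 ≤ 0 := by simpa using h3
    exact pow_eq_zero_iff (two_ne_zero) |>.1 (le_antisymm this (sq_nonneg _))
  have h5 : q * γ + r * β = 0 := by
    have : (q * γ + r * β) ^ 2 = 0 := by rw [← h1]; ring
    exact pow_eq_zero_iff (two_ne_zero) |>.1 this
  have hq : q ≠ 0 := fun h => by rw [h] at hqr; simp at hqr
  have hr : r ≠ 0 := fun h => by rw [h] at hqr; simp at hqr
  have hγ0 : γ = 0 := by
    have : q * γ = 0 := by linarith
    exact (mul_eq_zero.1 this).resolve_left hq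
  have hβ0 : β = 0 := by
    have : r * β = 0 := by linarith
    exact (mul_eq_zero.1 this).resolve_left hr
  apply hD0
  ext i j
  fin_cases i <;> fin_cases j
  · exact hα0
  · exact hβ0
  · exact hγ0
  · change D 1 1 = 0
    rw [e1]; linarith

/-- An elliptic matrix is a rotation in suitable coordinates, so its powers come back arbitrarily
close to its inverse. -/
theorem adjugate_mem_closure_powers (A : Mat2) (hA : A.det = 1) (ht : |A.trace| < 2) :
    A.adjugate ∈ closure (range fun k : ℕ => A ^ k) := by
  set θ := Real.arccos (A.trace / 2) with hθ
  rw [abs_lt] at ht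
  have hcos : Real.cos θ = A.trace / 2 := Real.cos_arccos (by linarith) (by linarith)
  have hsin : 0 < Real.sin θ := by
    rw [hθ, Real.sin_arccos]; apply Real.sqrt_pos.2; nlinarith
  let Z : Mat2 := (Real.sin θ)⁻¹ • (A - Real.cos θ • 1)
  have hAZ : A = Real.cos θ • 1 + Real.sin θ • Z := by
    simp only [Z]; rw [smul_smul, mul_inv_cancel₀ hsin.ne', one_smul]; abel
  have hZ : Z * Z = -1 := by
    have h1 : (A - Real.cos θ • (1 : Mat2)) * (A - Real.cos θ • (1 : Mat2)) =
        -(Real.sin θ ^ 2) • (1 : Mat2) := by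
      rw [Real.sin_sq, hcos]
      rw [Matrix.det_fin_two] at hA
      rw [Matrix.trace_fin_two]
      ext i j
      fin_cases i <;> fin_cases j <;> simp [Matrix.mul_apply, Fin.sum_univ_two] <;>
        first | linear_combination -hA | ring
    simp only [Z]
    rw [smul_mul_smul_comm, h1, smul_smul]
    have : (Real.sin θ)⁻¹ * (Real.sin θ)⁻¹ * -Real.sin θ ^ 2 = -1 := by field_simp
    rw [this]; simp
  have hpow : ∀ k : ℕ, A ^ k = Real.cos (k * θ) • 1 + Real.sin (k * θ) • Z := by
    intro k
    induction k with
    | zero => simp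
    | succ k ih =>
      rw [pow_succ, ih]
      nth_rewrite 1 [hAZ]
      push_cast
      rw [add_mul (k : ℝ), one_mul, Real.cos_add, Real.sin_add]
      simp only [add_mul, mul_add, smul_mul_smul_comm, mul_one, one_mul, hZ]
      module
  have hadj : A.adjugate = Real.cos (-θ) • 1 + Real.sin (-θ) • Z := by
    rw [Real.cos_neg, Real.sin_neg]
    have : A.adjugate = A.trace • 1 - A := by
      rw [Matrix.adjugate_fin_two, Matrix.trace_fin_two]
      ext i j
      fin_cases i <;> fin_cases j <;> simp
    rw [this]
    nth_rewrite 2 [hAZ]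
    have : A.trace = 2 * Real.cos θ := by linarith
    rw [this]; module
  let f : ℝ → Mat2 := fun x => Real.cos x • 1 + Real.sin x • Z
  have hf : Continuous f := by simp only [f]; fun_prop
  rw [hadj]
  change f (-θ) ∈ _
  rw [mem_closure_iff]
  intro o ho hmem
  obtain ⟨η, hη, hball⟩ := Metric.isOpen_iff.1 (ho.preimage hf) (-θ) hmem
  -- Dirichlet approximation of `θ / 2π`
  obtain ⟨N, hN⟩ := exists_nat_gt (2 * Real.pi / η)
  have hpi := Real.pi_pos
  obtain ⟨j, k, hk0, hkN, hjk⟩ := Real.exists_int_int_abs_mul_sub_le (θ / (2 * Real.pi))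
    (n := N + 1) (by omega)
  obtain ⟨k, rfl⟩ := Int.eq_ofNat_of_zero_le hk0.le
  have hdist : |k * θ - j * (2 * Real.pi)| < η := by
    have e : k * θ - j * (2 * Real.pi) = (2 * Real.pi) * (k * (θ / (2 * Real.pi)) - j) := by
      field_simp
    rw [e, abs_mul, abs_of_pos (by positivity)]
    have h1 : 2 * Real.pi < N * η := by rwa [div_lt_iff₀ hη] at hN
    push_cast at hjk
    calc 2 * Real.pi * |k * (θ / (2 * Real.pi)) - j| ≤ 2 * Real.pi * (1 / (N + 1 + 1)) := by
          gcongr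
      _ < η := by
          rw [mul_one_div, div_lt_iff₀ (by positivity)]; nlinarith
  have hk1 : 1 ≤ k := by exact_mod_cast hk0
  obtain ⟨i, rfl⟩ : ∃ i, k = i + 1 := ⟨k - 1, by omega⟩
  have hpi' : A ^ i = f (-θ + ((i + 1 : ℕ) * θ - j * (2 * Real.pi))) := by
    rw [hpow]
    simp only [f]
    have : (i : ℝ) * θ = -θ + ((i + 1 : ℕ) * θ - j * (2 * Real.pi)) + j * (2 * Real.pi) := by
      push_cast; ring
    rw [this, Real.cos_add_int_mul_two_pi, Real.sin_add_int_mul_two_pi]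
  refine ⟨A ^ i, ?_, ⟨i, rfl⟩⟩
  rw [hpi']
  apply hball
  rw [Metric.mem_ball, Real.dist_eq]
  simpa using hdist

/-- If all the traces `tr (A ^ k * Y)` stay bounded for `Y` in a spanning set, then a matrix `A` of
trace `±2` has no nilpotent part. -/
theorem scalar_of_abs_trace_eq_two (S : Set Mat2)
    (hspan : ∀ C : Mat2, (∀ A ∈ S, (A * C).trace = 0) → C = 0)
    (A : Mat2) (hA : A.det = 1) (ht : |A.trace| = 2)
    (hb : ∀ k : ℕ, ∀ Y ∈ S, |(A ^ k * Y).trace| ≤ 2) : ∃ e : ℝ, A = e • 1 := by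
  obtain ⟨e, he, hte⟩ : ∃ e : ℝ, |e| = 1 ∧ A.trace = 2 * e := by
    rcases abs_choice A.trace with h | h
    · exact ⟨1, by simp, by linarith⟩
    · exact ⟨-1, by simp, by linarith⟩
  have hee : e * e = 1 := by rw [← abs_mul_abs_self, he]; norm_num
  let N : Mat2 := e • A - 1
  have hAN : A = e • (1 + N) := by
    simp only [N]; rw [add_sub_cancel, smul_smul, hee, one_smul]
  have hNN : N * N = 0 := by
    simp only [N]
    rw [Matrix.det_fin_two] at hA
    rw [Matrix.trace_fin_two] at hte
    ext i j
    fin_cases i <;> fin_cases j <;>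
      simp [Matrix.mul_apply, Fin.sum_univ_two] <;> grind
  have hpow : ∀ k : ℕ, A ^ k = e ^ k • (1 + (k : ℝ) • N) := by
    intro k
    induction k with
    | zero => simp
    | succ k ih =>
      rw [pow_succ, ih]
      nth_rewrite 1 [hAN]
      rw [smul_mul_smul_comm, ← pow_succ]
      congr 1
      push_cast
      simp only [add_mul, mul_add, smul_mul_assoc, mul_one, one_mul, hNN]
      module
  have hN0 : N = 0 := by
    apply hspan
    intro Y hY
    rw [Matrix.trace_mul_comm]
    by_contra hne
    obtain ⟨k, hk⟩ := exists_nat_gt ((2 + |Y.trace|) / |(N * Y).trace|)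
    have h1 := hb k Y hY
    rw [div_lt_iff₀ (abs_pos.2 hne)] at hk
    rw [hpow, smul_mul_assoc, Matrix.trace_smul, smul_eq_mul, abs_mul, abs_pow, he, one_pow, one_mul,
      add_mul, one_mul, smul_mul_assoc, Matrix.trace_add, Matrix.trace_smul, smul_eq_mul] at h1
    have h2 : |(k : ℝ) * (N * Y).trace| = k * |(N * Y).trace| := by rw [abs_mul, Nat.abs_cast]
    have h3 := abs_sub_abs_le_abs_sub ((k : ℝ) * (N * Y).trace) (-Y.trace)
    rw [sub_neg_eq_add, abs_neg, add_comm _ Y.trace] at h3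
    linarith
  exact ⟨e, by rw [hAN, hN0, add_zero]⟩

/-- A spanning set of matrices in `SL(2,ℝ)` has a hyperbolic product. If all traces of products were
at most `2` in absolute value, two noncommuting elements `A`, `B` of the set would be elliptic;
approximating `A⁻¹`, `B⁻¹` by powers, `tr (A B A⁻¹ B⁻¹) > 2` gives a contradiction. -/
theorem exists_hyperbolic_prod (S : Set Mat2) (hdet : ∀ A ∈ S, A.det = 1)
    (hspan : ∀ C : Mat2, (∀ A ∈ S, (A * C).trace = 0) → C = 0) :
    ∃ L : List Mat2, (∀ A ∈ L, A ∈ S) ∧ 2 < |L.prod.trace| := by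
  by_contra hcon
  push Not at hcon
  obtain ⟨A, hA, B, hB, hAB⟩ : ∃ A ∈ S, ∃ B ∈ S, A * B ≠ B * A := by
    by_contra hcomm
    push Not at hcomm
    let X : Mat2 := !![0, 1; 0, 0]
    have hBX : ∀ B ∈ S, B 1 0 = 0 := by
      intro B hB
      have : B * X - X * B = 0 := by
        apply hspan
        intro A hA
        rw [mul_sub, Matrix.trace_sub, ← mul_assoc, hcomm A hA B hB, mul_assoc,
          Matrix.trace_mul_comm, mul_assoc, sub_self]
      have h := congrFun (congrFun this 0) 0
      simpa [X, Matrix.mul_apply, Fin.sum_univ_two, Matrix.vecMul, dotProduct] using h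
    have hX : X = 0 := by
      apply hspan
      intro B hB
      simp [X, Matrix.trace_fin_two, Matrix.mul_apply, Fin.sum_univ_two, hBX B hB]
    have := congrFun (congrFun hX 0) 1
    simp [X] at this
  have hell : ∀ A ∈ S, (¬ ∃ e : ℝ, A = e • 1) → |A.trace| < 2 := by
    intro A hA hne
    have h1 : |A.trace| ≤ 2 := by simpa using hcon [A] (by simpa using hA)
    refine lt_of_le_of_ne h1 fun h2 => hne ?_
    refine scalar_of_abs_trace_eq_two S hspan A (hdet A hA) h2 fun k Y hY => ?_
    have := hcon (List.replicate k A ++ [Y]) (by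
      intro Z hZ
      rw [List.mem_append, List.mem_singleton] at hZ
      rcases hZ with hZ | rfl
      · rwa [List.eq_of_mem_replicate hZ]
      · exact hY)
    simpa using this
  have hAe := hell A hA (by rintro ⟨e, rfl⟩; exact hAB (by simp))
  have hBe := hell B hB (by rintro ⟨e, rfl⟩; exact hAB (by simp))
  have hA1 := adjugate_mem_closure_powers A (hdet A hA) hAe
  have hB1 := adjugate_mem_closure_powers B (hdet B hB) hBe
  have hle : (A * B * A.adjugate * B.adjugate).trace ≤ 2 := by
    have hword : ∀ k l : ℕ, (A * B * A ^ k * B ^ l).trace ≤ 2 := by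
      intro k l
      have := hcon ([A, B] ++ (List.replicate k A ++ List.replicate l B)) (by
        intro Z hZ
        simp only [List.mem_append, List.mem_replicate, List.mem_cons, List.not_mem_nil] at hZ
        rcases hZ with (rfl | rfl | h) | ⟨_, rfl⟩ | ⟨_, rfl⟩
        · exact hA
        · exact hB
        · exact h.elim
        · exact hA
        · exact hB)
      have h2 := (le_abs_self _).trans this
      simpa [mul_assoc] using h2
    have hA2 : ∀ l : ℕ, (A * B * A.adjugate * B ^ l).trace ≤ 2 := by
      intro l
      have hcl : IsClosed {P : Mat2 | (A * B * P * B ^ l).trace ≤ 2} :=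
        isClosed_le (by fun_prop) continuous_const
      have hsub : (range fun k : ℕ => A ^ k) ⊆ {P : Mat2 | (A * B * P * B ^ l).trace ≤ 2} := by
        rintro _ ⟨k, rfl⟩
        exact hword k l
      exact closure_minimal hsub hcl hA1
    have hcl : IsClosed {P : Mat2 | (A * B * A.adjugate * P).trace ≤ 2} :=
      isClosed_le (by fun_prop) continuous_const
    have hsub : (range fun k : ℕ => B ^ k) ⊆ {P : Mat2 | (A * B * A.adjugate * P).trace ≤ 2} := by
      rintro _ ⟨l, rfl⟩
      exact hA2 l
    exact closure_minimal hsub hcl hB1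
  have hAadj : A * A.adjugate = 1 := by rw [Matrix.mul_adjugate, hdet A hA, one_smul]
  have hBadj : B * B.adjugate = 1 := by rw [Matrix.mul_adjugate, hdet B hB, one_smul]
  have hdadj : ∀ M : Mat2, M.det = 1 → M.adjugate.det = 1 := by
    intro M hM; rw [Matrix.det_adjugate, hM, one_pow]
  have h1 : A * B * A.adjugate * B.adjugate - 1 =
      (A * B - B * A) * (A.adjugate * B.adjugate) := by
    rw [sub_mul]
    congr 1
    · simp only [mul_assoc]
    · rw [mul_assoc, ← mul_assoc A, hAadj, one_mul, hBadj]
  have h2 := det_sub_one_eq (A * B * A.adjugate * B.adjugate) (by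
    simp [Matrix.det_mul, hdet A hA, hdet B hB, Matrix.det_adjugate])
  rw [h1, Matrix.det_mul, Matrix.det_mul, hdadj A (hdet A hA), hdadj B (hdet B hB), mul_one,
    mul_one] at h2
  have h3 := det_commutator_neg A B (hdet A hA) hAe hAB
  linarith

/-- Upper elementary matrix. -/
def shU (δ : ℝ) : Mat2 := !![1, δ; 0, 1]

/-- Lower elementary matrix. -/
def shL (δ : ℝ) : Mat2 := !![1, 0; δ, 1]

/-- Elementary matrices generate `SL(2,ℝ)`. -/
theorem sl2_induction (P : Mat2 → Prop) (h1 : P 1)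
    (hU : ∀ δ M, P M → P (shU δ * M)) (hL : ∀ δ M, P M → P (shL δ * M))
    (M : Mat2) (hM : M.det = 1) : P M := by
  have main : ∀ M : Mat2, M.det = 1 → M 1 0 ≠ 0 → P M := by
    intro M hM hc
    have e : M = shU ((M 0 0 - 1) / M 1 0) * (shL (M 1 0) * (shU ((M 1 1 - 1) / M 1 0) * 1)) := by
      rw [Matrix.det_fin_two] at hM
      ext i j
      fin_cases i <;> fin_cases j <;>
        simp [shU, shL, Matrix.mul_apply, Fin.sum_univ_two] <;> field_simp <;> grind
    rw [e]
    exact hU _ _ (hL _ _ (hU _ _ h1))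
  by_cases hc : M 1 0 = 0
  · have h00 : M 0 0 ≠ 0 := by
      intro h0; rw [Matrix.det_fin_two, hc, h0] at hM; simp at hM
    have e : M = shL (-1) * (shL 1 * M) := by
      rw [← mul_assoc]
      have : shL (-1) * shL 1 = 1 := by
        ext i j
        fin_cases i <;> fin_cases j <;> simp [shL, Matrix.mul_apply, Fin.sum_univ_two]
      rw [this, one_mul]
    rw [e]
    apply hL
    apply main
    · rw [Matrix.det_mul, hM]; simp [shL, Matrix.det_fin_two]
    · simpa [shL, Matrix.mul_apply, Fin.sum_univ_two, hc] using h00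
  · exact main M hM hc

/-- A function `δ ↦ tr ((X (1 + δN) K) ^ n C)` is polynomial in `δ`, hence vanishes identically as
soon as it vanishes near `0`. -/
theorem trace_pow_eq_zero_of_small (X N K C : Mat2) (n : ℕ) (δ₀ : ℝ) (hδ₀ : 0 < δ₀)
    (h : ∀ δ : ℝ, |δ| < δ₀ → ((X * (1 + δ • N) * K) ^ n * C).trace = 0) (δ : ℝ) :
    ((X * (1 + δ • N) * K) ^ n * C).trace = 0 := by
  let Q : Matrix (Fin 2) (Fin 2) (Polynomial ℝ) :=
    (X.map Polynomial.C * (1 + (Polynomial.X : Polynomial ℝ) • N.map Polynomial.C) *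
      K.map Polynomial.C) ^ n * C.map Polynomial.C
  have hev : ∀ δ : ℝ, Polynomial.eval δ Q.trace = ((X * (1 + δ • N) * K) ^ n * C).trace := by
    intro δ
    have h0 : ∀ M : Mat2, (M.map Polynomial.C).map (Polynomial.evalRingHom δ) = M := by
      intro M; ext i j; simp
    have h1 : Q.map (Polynomial.evalRingHom δ) = (X * (1 + δ • N) * K) ^ n * C := by
      have h2 : (1 + (Polynomial.X : Polynomial ℝ) • N.map Polynomial.C).map
          (Polynomial.evalRingHom δ) = 1 + δ • N := by
        ext i j
        fin_cases i <;> fin_cases j <;> simp <;> ring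
      simp only [Q]
      rw [Matrix.map_mul, Matrix.map_pow, Matrix.map_mul, Matrix.map_mul, h0, h0, h0, h2]
    rw [← h1]
    simp [Matrix.trace_fin_two]
  have hzero : Q.trace = 0 := by
    apply Polynomial.eq_zero_of_infinite_isRoot
    refine (Ioo_infinite (show -δ₀ < δ₀ by linarith)).mono fun δ hδ => ?_
    change Polynomial.eval δ _ = 0
    rw [hev]
    exact h δ (abs_lt.2 hδ)
  rw [← hev, hzero, Polynomial.eval_zero]

/-- If a nonempty family `Ω` in `SL(2,ℝ)` is stable under small elementary right factors, then no
nonzero linear functional vanishes on all `n`-th powers of its elements. -/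
theorem pow_spanning (Ω : Set Mat2) (n : ℕ) (hn : 0 < n) (B : Mat2) (hB : B ∈ Ω)
    (hdet : ∀ X ∈ Ω, X.det = 1)
    (hU : ∀ X ∈ Ω, ∃ δ₀ > 0, ∀ δ : ℝ, |δ| < δ₀ → X * shU δ ∈ Ω)
    (hL : ∀ X ∈ Ω, ∃ δ₀ > 0, ∀ δ : ℝ, |δ| < δ₀ → X * shL δ ∈ Ω)
    (C : Mat2) (hC : ∀ X ∈ Ω, (X ^ n * C).trace = 0) : C = 0 := by
  have eU : ∀ δ, shU δ = 1 + δ • !![0, 1; 0, 0] := by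
    intro δ; ext i j; fin_cases i <;> fin_cases j <;> simp [shU]
  have eL : ∀ δ, shL δ = 1 + δ • !![0, 0; 1, 0] := by
    intro δ; ext i j; fin_cases i <;> fin_cases j <;> simp [shL]
  have key : ∀ K : Mat2, K.det = 1 → ∀ X ∈ Ω, ((X * K) ^ n * C).trace = 0 := by
    intro K hK
    refine sl2_induction (fun K => ∀ X ∈ Ω, ((X * K) ^ n * C).trace = 0) ?_ ?_ ?_ K hK
    · intro X hX; simpa using hC X hX
    · intro δ M hM X hX
      obtain ⟨δ₀, hδ₀, h⟩ := hU X hX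
      rw [← mul_assoc, eU]
      refine trace_pow_eq_zero_of_small _ _ _ _ _ δ₀ hδ₀ (fun δ hδ => ?_) δ
      rw [← eU]; exact hM _ (h δ hδ)
    · intro δ M hM X hX
      obtain ⟨δ₀, hδ₀, h⟩ := hL X hX
      rw [← mul_assoc, eL]
      refine trace_pow_eq_zero_of_small _ _ _ _ _ δ₀ hδ₀ (fun δ hδ => ?_) δ
      rw [← eL]; exact hM _ (h δ hδ)
  have all : ∀ X : Mat2, X.det = 1 → (X ^ n * C).trace = 0 := by
    intro X hX
    have := key (B.adjugate * X) (by
      rw [Matrix.det_mul, Matrix.det_adjugate, hdet B hB, hX]; simp) B hB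
    rwa [← mul_assoc, Matrix.mul_adjugate, hdet B hB, one_smul, one_mul] at this
  have powU : ∀ k : ℕ, shU 1 ^ k = shU k := by
    intro k
    induction k with
    | zero => ext i j; fin_cases i <;> fin_cases j <;> simp [shU]
    | succ k ih =>
      rw [pow_succ, ih]
      ext i j; fin_cases i <;> fin_cases j <;>
        simp [shU, Matrix.mul_apply, Fin.sum_univ_two, add_comm]
  have powL : ∀ k : ℕ, shL 1 ^ k = shL k := by
    intro k
    induction k with
    | zero => ext i j; fin_cases i <;> fin_cases j <;> simp [shL]
    | succ k ih =>
      rw [pow_succ, ih]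
      ext i j; fin_cases i <;> fin_cases j <;>
        simp [shL, Matrix.mul_apply, Fin.sum_univ_two, add_comm]
  have h1 := all 1 (by simp)
  have h2 := all (shU 1) (by simp [shU, Matrix.det_fin_two])
  have h3 := all (shL 1) (by simp [shL, Matrix.det_fin_two])
  have h4 := all (Matrix.diagonal ![2, 1 / 2]) (by simp)
  rw [powU] at h2
  rw [powL] at h3
  rw [Matrix.diagonal_pow] at h4
  simp [Matrix.trace_fin_two, Matrix.mul_apply, Fin.sum_univ_two, shU, shL,
    Matrix.vecMul, dotProduct] at h1 h2 h3 h4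
  have hn' : (n : ℝ) ≠ 0 := by exact_mod_cast hn.ne'
  have c10 : C 1 0 = 0 := by
    have : (n : ℝ) * C 1 0 = 0 := by linarith
    exact (mul_eq_zero.1 this).resolve_left hn'
  have c01 : C 0 1 = 0 := by
    have : (n : ℝ) * C 0 1 = 0 := by linarith
    exact (mul_eq_zero.1 this).resolve_left hn'
  have h2n : (1 : ℝ) < 2 ^ n := one_lt_pow₀ (by norm_num) hn.ne'
  have h2n' : ((2 : ℝ) ^ n)⁻¹ < 1 := inv_lt_one_of_one_lt₀ h2n
  have c00 : C 0 0 = 0 := by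
    have e : C 1 1 = -C 0 0 := by linarith
    rw [e] at h4
    have : ((2 : ℝ) ^ n - (2 ^ n)⁻¹) * C 0 0 = 0 := by linarith
    exact (mul_eq_zero.1 this).resolve_left (by linarith)
  ext i j
  fin_cases i <;> fin_cases j
  · exact c00
  · exact c01
  · exact c10
  · change C 1 1 = 0
    linarith

/-! ### Perturbing the transfer matrix by elementary factors -/

theorem exists_bound_of_zero_off (f : ℝ → ℝ) (hf : Continuous f) (b c : ℝ)
    (h0 : ∀ x ∉ Icc b c, f x = 0) : ∃ C, 0 ≤ C ∧ ∀ x, |f x| ≤ C := by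
  obtain ⟨C, hC⟩ := isCompact_Icc.exists_bound_of_continuousOn (s := Icc b c) hf.continuousOn
  refine ⟨|C|, abs_nonneg C, fun x => ?_⟩
  by_cases hx : x ∈ Icc b c
  · exact (hC x hx).trans (le_abs_self C)
  · rw [h0 x hx, abs_zero]; exact abs_nonneg C

theorem contDiff_deriv_of_contDiff {f : ℝ → ℝ} (hf : ContDiff ℝ (⊤ : ℕ∞) f) :
    ContDiff ℝ (⊤ : ℕ∞) (deriv f) := by
  have h := (contDiff_succ_iff_deriv (n := ((⊤ : ℕ∞) : WithTop ℕ∞)) (f := f)).1 (by simpa using hf)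
  exact h.2.2

/-- A potential `q` can be changed by an arbitrarily small amount inside `[a/3, 2a/3]` so that the
pair of solutions `(u, w)` with Wronskian `1` is continued to `(u, w + δ u)` on the right of the
perturbed region. The new solutions are `g u` and `g (w + δ η u)`, with `η` a smooth step and
`g = (1 + δ η' u²)^(-1/2)` chosen to keep the Wronskian equal to `1`. -/
theorem shear_perturb (q u u' w w' : ℝ → ℝ) (hq : ContDiff ℝ (⊤ : ℕ∞) q)
    (hu : IsSol q u u') (hw : IsSol q w w') (hW : ∀ x, u x * w' x - u' x * w x = 1)
    (a : ℝ) (ha : 0 < a) (ε : ℝ) (hε : 0 < ε) :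
    ∃ δ₀ > 0, ∀ δ : ℝ, |δ| < δ₀ → ∃ qt U U' T T' : ℝ → ℝ,
      ContDiff ℝ (⊤ : ℕ∞) qt ∧ (∀ x ∉ Icc (a / 3) (2 * a / 3), qt x = q x) ∧
      (∀ x, |qt x - q x| ≤ ε) ∧ IsSol qt U U' ∧ IsSol qt T T' ∧
      U 0 = u 0 ∧ U' 0 = u' 0 ∧ T 0 = w 0 ∧ T' 0 = w' 0 ∧
      U a = u a ∧ U' a = u' a ∧ T a = w a + δ * u a ∧ T' a = w' a + δ * u' a := by
  let η : ℝ → ℝ := fun x => Real.smoothTransition ((3 * x - a) / a)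
  have hη : ContDiff ℝ (⊤ : ℕ∞) η := by
    apply Real.smoothTransition.contDiff.comp
    fun_prop
  have hη1 := contDiff_deriv_of_contDiff hη
  have hη2 := contDiff_deriv_of_contDiff hη1
  have hη3 := contDiff_deriv_of_contDiff hη2
  set η1 := deriv η with e1
  set η2 := deriv η1 with e2
  set η3 := deriv η2 with e3
  have d0 : ∀ x, HasDerivAt η (η1 x) x := fun x =>
    (hη.differentiable (by simp) x).hasDerivAt
  have d1 : ∀ x, HasDerivAt η1 (η2 x) x := fun x =>
    (hη1.differentiable (by simp) x).hasDerivAt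
  have d2 : ∀ x, HasDerivAt η2 (η3 x) x := fun x =>
    (hη2.differentiable (by simp) x).hasDerivAt
  have η_left : ∀ x, x ≤ a / 3 → η x = 0 := by
    intro x hx
    apply Real.smoothTransition.zero_of_nonpos
    apply div_nonpos_of_nonpos_of_nonneg _ ha.le
    linarith
  have η_right : ∀ x, 2 * a / 3 ≤ x → η x = 1 := by
    intro x hx
    apply Real.smoothTransition.one_of_one_le
    rw [le_div_iff₀ ha]; linarith
  have hopen : IsOpen (Icc (a / 3) (2 * a / 3))ᶜ := isClosed_Icc.isOpen_compl
  have z1 : ∀ x ∉ Icc (a / 3) (2 * a / 3), η1 x = 0 := by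
    intro x hx
    rw [mem_Icc, not_and_or, not_le, not_le] at hx
    rcases hx with hx | hx
    · have : η =ᶠ[nhds x] fun _ => 0 := by
        filter_upwards [Iio_mem_nhds hx] with y hy using η_left y (le_of_lt hy)
      rw [e1, this.deriv_eq]; simp
    · have : η =ᶠ[nhds x] fun _ => 1 := by
        filter_upwards [Ioi_mem_nhds hx] with y hy using η_right y (le_of_lt hy)
      rw [e1, this.deriv_eq]; simp
  have z2 : ∀ x ∉ Icc (a / 3) (2 * a / 3), η2 x = 0 := by
    intro x hx
    have : η1 =ᶠ[nhds x] fun _ => 0 := by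
      filter_upwards [hopen.mem_nhds hx] with y hy using z1 y hy
    rw [e2, this.deriv_eq]; simp
  have z3 : ∀ x ∉ Icc (a / 3) (2 * a / 3), η3 x = 0 := by
    intro x hx
    have : η2 =ᶠ[nhds x] fun _ => 0 := by
      filter_upwards [hopen.mem_nhds hx] with y hy using z2 y hy
    rw [e3, this.deriv_eq]; simp
  have cu := hu.contDiff hq
  have cu' := hu.contDiff' hq
  let κ : ℝ → ℝ := fun x => η2 x * u x + 2 * (η1 x * u' x)
  let κ' : ℝ → ℝ := fun x => η3 x * u x + 3 * (η2 x * u' x) + 2 * (η1 x * (q x * u x))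
  have cκ : ContDiff ℝ (⊤ : ℕ∞) κ := by simp only [κ]; fun_prop
  have cκ' : ContDiff ℝ (⊤ : ℕ∞) κ' := by simp only [κ']; fun_prop
  have dκ : ∀ x, HasDerivAt κ (κ' x) x := fun x =>
    (((d2 x).mul (hu.d1 x)).add (((d1 x).mul (hu.d2 x)).const_mul 2)).congr_deriv (by
      simp only [κ']; ring)
  have zκ : ∀ x ∉ Icc (a / 3) (2 * a / 3), κ x = 0 := fun x hx => by
    simp [κ, z1 x hx, z2 x hx]
  have zκ' : ∀ x ∉ Icc (a / 3) (2 * a / 3), κ' x = 0 := fun x hx => by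
    simp [κ', z1 x hx, z2 x hx, z3 x hx]
  let h : ℝ → ℝ := fun x => η1 x * u x ^ 2
  have ch : ContDiff ℝ (⊤ : ℕ∞) h := by simp only [h]; fun_prop
  have dh : ∀ x, HasDerivAt h (u x * κ x) x := fun x =>
    ((d1 x).mul ((hu.d1 x).pow 2)).congr_deriv (by simp only [κ, Pi.pow_apply]; ring)
  let c1 : ℝ → ℝ := fun x => -(3 / 2) * (κ x * u' x) - 1 / 2 * (u x * κ' x)
  let c2 : ℝ → ℝ := fun x => 3 / 4 * (u x ^ 2 * κ x ^ 2)
  have cc1 : ContDiff ℝ (⊤ : ℕ∞) c1 := by simp only [c1]; fun_prop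
  have cc2 : ContDiff ℝ (⊤ : ℕ∞) c2 := by simp only [c2]; fun_prop
  obtain ⟨H, hH0, hH⟩ := exists_bound_of_zero_off h ch.continuous (a / 3) (2 * a / 3)
    (fun x hx => by simp [h, z1 x hx])
  obtain ⟨C1, hC10, hC1⟩ := exists_bound_of_zero_off c1 cc1.continuous (a / 3) (2 * a / 3)
    (fun x hx => by simp [c1, zκ x hx, zκ' x hx])
  obtain ⟨C2, hC20, hC2⟩ := exists_bound_of_zero_off c2 cc2.continuous (a / 3) (2 * a / 3)
    (fun x hx => by simp [c2, zκ x hx])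
  refine ⟨min 1 (min (1 / (2 * (H + 1))) (ε / (2 * C1 + 4 * C2 + 1))), by positivity, ?_⟩
  intro δ hδ
  rw [lt_min_iff, lt_min_iff, lt_div_iff₀ (by positivity), lt_div_iff₀ (by positivity)] at hδ
  obtain ⟨hδ1, hδ2, hδ3⟩ := hδ
  have hδ0 := abs_nonneg δ
  have hG : ∀ x, 1 / 2 ≤ 1 + δ * h x := by
    intro x
    have h1 : |δ * h x| ≤ |δ| * H := by rw [abs_mul]; gcongr; exact hH x
    have h2 := neg_abs_le (δ * h x)
    nlinarith
  have hGpos : ∀ x, 0 < 1 + δ * h x := fun x => by linarith [hG x]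
  let g : ℝ → ℝ := fun x => (√(1 + δ * h x))⁻¹
  have hgG : ∀ x, g x ^ 2 * (1 + δ * h x) = 1 := by
    intro x
    simp only [g, inv_pow]
    rw [Real.sq_sqrt (hGpos x).le, inv_mul_cancel₀ (hGpos x).ne']
  have hg2 : ∀ x, g x ^ 2 ≤ 2 := by
    intro x
    have := hgG x
    have := hG x
    nlinarith [sq_nonneg (g x)]
  have cg : ContDiff ℝ (⊤ : ℕ∞) g := by
    refine ContDiff.inv (ContDiff.sqrt (by fun_prop) fun x => (hGpos x).ne') fun x => ?_
    exact (Real.sqrt_pos.2 (hGpos x)).ne'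
  let g1 : ℝ → ℝ := fun x => -(1 / 2) * δ * (u x * κ x) * g x ^ 3
  have dg : ∀ x, HasDerivAt g (g1 x) x := by
    intro x
    have hs := Real.sqrt_pos.2 (hGpos x)
    have := ((((dh x).const_mul δ).const_add 1).sqrt (hGpos x).ne').inv hs.ne'
    refine this.congr_deriv ?_
    simp only [g1, g]
    field_simp
  have dg1 : ∀ x, HasDerivAt g1 (-(1 / 2) * δ * (u' x * κ x + u x * κ' x) * g x ^ 3
      + -(1 / 2) * δ * (u x * κ x) * (3 * g x ^ 2 * g1 x)) x := by
    intro x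
    exact (((((hu.d1 x).mul (dκ x)).const_mul (-(1 / 2) * δ))).mul ((dg x).pow 3)).congr_deriv
      (by simp)
  let qt : ℝ → ℝ := fun x => q x + δ * c1 x * g x ^ 2 + δ ^ 2 * c2 x * g x ^ 4
  have g_off : ∀ x ∉ Icc (a / 3) (2 * a / 3), g x = 1 := fun x hx => by simp [g, h, z1 x hx]
  have g1_off : ∀ x ∉ Icc (a / 3) (2 * a / 3), g1 x = 0 := fun x hx => by simp [g1, zκ x hx]
  have off0 : (0 : ℝ) ∉ Icc (a / 3) (2 * a / 3) := fun hx => by have := hx.1; linarith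
  have offa : a ∉ Icc (a / 3) (2 * a / 3) := fun hx => by have := hx.2; linarith
  refine ⟨qt, fun x => g x * u x, fun x => g1 x * u x + g x * u' x,
    fun x => g x * (w x + δ * (η x * u x)),
    fun x => g1 x * (w x + δ * (η x * u x)) + g x * (w' x + δ * (η1 x * u x + η x * u' x)),
    ?_, ?_, ?_, ⟨?_, ?_⟩, ⟨?_, ?_⟩, ?_⟩
  · simp only [qt]; fun_prop
  · intro x hx
    simp [qt, c1, c2, zκ x hx, zκ' x hx]
  · intro x
    have e : qt x - q x = δ * c1 x * g x ^ 2 + δ ^ 2 * c2 x * (g x ^ 2) ^ 2 := by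
      simp only [qt]; ring
    rw [e]
    have hgn := sq_nonneg (g x)
    have b1 : |δ * c1 x * g x ^ 2| ≤ |δ| * C1 * 2 := by
      rw [abs_mul, abs_mul, abs_of_nonneg hgn]
      gcongr
      · exact hC1 x
      · exact hg2 x
    have b2 : |δ ^ 2 * c2 x * (g x ^ 2) ^ 2| ≤ |δ| * C2 * 2 ^ 2 := by
      rw [abs_mul, abs_mul, abs_of_nonneg (sq_nonneg (g x ^ 2)), abs_pow]
      gcongr
      · nlinarith
      · exact hC2 x
      · exact hg2 x
    have := abs_add_le (δ * c1 x * g x ^ 2) (δ ^ 2 * c2 x * (g x ^ 2) ^ 2)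
    nlinarith
  · exact fun x => (dg x).mul (hu.d1 x)
  · intro x
    refine (((dg1 x).mul (hu.d1 x)).add ((dg x).mul (hu.d2 x))).congr_deriv ?_
    simp only [qt, c1, c2, g1]; ring
  · exact fun x => ((dg x).mul ((hw.d1 x).add (((d0 x).mul (hu.d1 x)).const_mul δ))).congr_deriv
      (by simp only [Pi.add_apply, Pi.mul_apply])
  · intro x
    have k1 := (dg1 x).mul ((hw.d1 x).add (((d0 x).mul (hu.d1 x)).const_mul δ))
    have k2 := (dg x).mul ((hw.d2 x).add
      ((((d1 x).mul (hu.d1 x)).add ((d0 x).mul (hu.d2 x))).const_mul δ))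
    refine (k1.add k2).congr_deriv ?_
    have hg := hgG x
    have hWx := hW x
    simp only [h] at hg
    simp only [qt, c1, c2, g1, Pi.add_apply, Pi.mul_apply]
    have hκ : κ x = η2 x * u x + 2 * (η1 x * u' x) := rfl
    linear_combination (-(δ * κ x * g x ^ 3)) * hWx - (δ * κ x * g x) * hg - (g x * δ) * hκ
  · have ηa : η a = 1 := η_right a (by linarith)
    have η0' : η 0 = 0 := η_left 0 (by linarith)
    simp only [g_off 0 off0, g1_off 0 off0, g_off a offa, g1_off a offa, z1 0 off0, z1 a offa, ηa,
      η0']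
    simp

/-- Transfer matrices of the smooth potentials supported in `(0,a)` that are uniformly closer than
`ε` to `ψ₀`. -/
def nearTransfers (E a : ℝ) (ψ₀ : ℝ → ℝ) (ε : ℝ) : Set Mat2 :=
  {B | ∃ ψ : ℝ → ℝ, ContDiff ℝ (⊤ : ℕ∞) ψ ∧ tsupport ψ ⊆ Ioo 0 a ∧
    (∃ ε₁ < ε, ∀ x, |ψ x - ψ₀ x| ≤ ε₁) ∧ IsTransfer (fun x => ψ x - E) a B}

/-- Modifying a potential near `ψ₀` slightly inside `[a/3, 2a/3]` keeps its transfer matrix in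
`nearTransfers`. -/
theorem potential_update {E a ε : ℝ} (ha : 0 < a) {ψ ψ₀ qt : ℝ → ℝ} {ε₁ : ℝ}
    (hsupp : tsupport ψ ⊆ Ioo 0 a) (hε₁ : ε₁ < ε) (hclose : ∀ x, |ψ x - ψ₀ x| ≤ ε₁)
    (hqt : ContDiff ℝ (⊤ : ℕ∞) qt)
    (hoff : ∀ x ∉ Icc (a / 3) (2 * a / 3), qt x = ψ x - E)
    (hnear : ∀ x, |qt x - (ψ x - E)| ≤ (ε - ε₁) / 2) {B : Mat2} (hB : IsTransfer qt a B) :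
    B ∈ nearTransfers E a ψ₀ ε := by
  refine ⟨fun x => qt x + E, by fun_prop, ?_, ⟨(ε + ε₁) / 2, by linarith, fun x => ?_⟩, by
    simpa using hB⟩
  · have : tsupport (fun x => qt x + E) ⊆ Icc (a / 3) (2 * a / 3) ∪ tsupport ψ := by
      refine closure_minimal ?_ (isClosed_Icc.union (isClosed_tsupport ψ))
      intro x hx
      by_contra hcon
      rw [mem_union, not_or] at hcon
      apply hx
      change qt x + E = 0
      rw [hoff x hcon.1, image_eq_zero_of_notMem_tsupport hcon.2]; ring
    refine this.trans (union_subset ?_ hsupp)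
    intro x hx
    exact ⟨by have := hx.1; linarith, by have := hx.2; linarith⟩
  · have h1 := hnear x
    have h2 := hclose x
    rw [abs_le] at *
    constructor <;> linarith

/-- Right multiplication by a small `shU δ` replaces the solutions `(c, s)` by `(c, s + δ c)`, which
`shear_perturb` realises. -/
theorem nearTransfers_shU {E a ε : ℝ} (ha : 0 < a) {ψ₀ : ℝ → ℝ} {X : Mat2}
    (hX : X ∈ nearTransfers E a ψ₀ ε) :
    ∃ δ₀ > 0, ∀ δ : ℝ, |δ| < δ₀ → X * shU δ ∈ nearTransfers E a ψ₀ ε := by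
  obtain ⟨ψ, hψ, hsupp, ⟨ε₁, hε₁, hclose⟩, c, c', s, s', hc, hs, h1, h2, h3, h4, rfl⟩ := hX
  obtain ⟨δ₀, hδ₀, H⟩ := shear_perturb (fun x => ψ x - E) c c' s s' (by fun_prop) hc hs
    (fun x => by rw [wronskian_const_univ hc hs x, h1, h2, h3, h4]; ring) a ha ((ε - ε₁) / 2)
    (by linarith)
  refine ⟨δ₀, hδ₀, fun δ hδ => ?_⟩
  obtain ⟨qt, U, U', T, T', k1, k2, k3, k4, k5, k6, k7, k8, k9, k10, k11, k12, k13⟩ := H δ hδ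
  refine potential_update ha hsupp hε₁ hclose k1 k2 k3 ⟨U, U', T, T', k4, k5, by rw [k6, h1],
    by rw [k7, h2], by rw [k8, h3], by rw [k9, h4], ?_⟩
  rw [k10, k11, k12, k13]
  ext i j
  fin_cases i <;> fin_cases j <;>
    simp [shU, Matrix.mul_apply, Fin.sum_univ_two] <;> ring

theorem nearTransfers_shL {E a ε : ℝ} (ha : 0 < a) {ψ₀ : ℝ → ℝ} {X : Mat2}
    (hX : X ∈ nearTransfers E a ψ₀ ε) :
    ∃ δ₀ > 0, ∀ δ : ℝ, |δ| < δ₀ → X * shL δ ∈ nearTransfers E a ψ₀ ε := by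
  obtain ⟨ψ, hψ, hsupp, ⟨ε₁, hε₁, hclose⟩, c, c', s, s', hc, hs, h1, h2, h3, h4, rfl⟩ := hX
  have hc0 := hc.add_smul hs (-1) 0
  -- the pair `(s, -c)` also has Wronskian `1`
  obtain ⟨δ₀, hδ₀, H⟩ := shear_perturb (fun x => ψ x - E) s s' _ _ (by fun_prop) hs hc0
    (fun x => by
      have := wronskian_const_univ hc hs x
      rw [h1, h2, h3, h4] at this
      linarith) a ha ((ε - ε₁) / 2)
    (by linarith)
  refine ⟨δ₀, hδ₀, fun δ hδ => ?_⟩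
  obtain ⟨qt, U, U', T, T', k1, k2, k3, k4, k5, k6, k7, k8, k9, k10, k11, k12, k13⟩ :=
    H (-δ) (by rwa [abs_neg])
  refine potential_update ha hsupp hε₁ hclose k1 k2 k3 ⟨_, _, U, U', k5.add_smul k4 (-1) 0, k4,
    by rw [k8, h1, h3]; ring, by rw [k9, h2, h4]; ring, by rw [k6, h3], by rw [k7, h4], ?_⟩
  rw [k10, k11, k12, k13]
  ext i j
  fin_cases i <;> fin_cases j <;>
    simp [shL, Matrix.mul_apply, Fin.sum_univ_two] <;> ring

/-! ### Products of transfer matrices -/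

/-- `cocycle A k = A (k-1) * ⋯ * A 0`. -/
def cocycle (A : ℕ → Mat2) : ℕ → Mat2
  | 0 => 1
  | k + 1 => A k * cocycle A k

theorem cocycle_add (A : ℕ → Mat2) (k l : ℕ) :
    cocycle A (k + l) = cocycle (fun i => A (k + i)) l * cocycle A k := by
  induction l with
  | zero => simp [cocycle]
  | succ l ih => rw [← add_assoc]; simp only [cocycle, ih, mul_assoc]

theorem cocycle_congr {A B : ℕ → Mat2} {k : ℕ} (h : ∀ i < k, A i = B i) :
    cocycle A k = cocycle B k := by
  induction k with
  | zero => rfl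
  | succ k ih => simp only [cocycle, h k (by omega), ih fun i hi => h i (by omega)]

theorem cocycle_const (A : Mat2) (k : ℕ) : cocycle (fun _ => A) k = A ^ k := by
  induction k with
  | zero => simp [cocycle]
  | succ k ih => rw [cocycle, ih, pow_succ']

theorem cocycle_det {A : ℕ → Mat2} (h : ∀ i, (A i).det = 1) (k : ℕ) : (cocycle A k).det = 1 := by
  induction k with
  | zero => simp [cocycle]
  | succ k ih => rw [cocycle, Matrix.det_mul, h, ih, one_mul]

theorem cocycle_mul (A : ℕ → Mat2) (m k : ℕ) :
    cocycle A (m * k) = cocycle (fun i => cocycle (fun r => A (m * i + r)) m) k := by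
  induction k with
  | zero => simp [cocycle]
  | succ k ih => rw [mul_add, mul_one, cocycle_add, ih]; rfl

/-- A list is read from its last entry, which is `Y 0`, to match the order of the factors in `cocycle`. -/
theorem cocycle_of_list (S : Set Mat2) (hS : S.Nonempty) (L : List Mat2) (hL : ∀ A ∈ L, A ∈ S) :
    ∃ Y : ℕ → Mat2, (∀ k, Y k ∈ S) ∧ cocycle Y L.length = L.prod := by
  induction L with
  | nil =>
    obtain ⟨A, hA⟩ := hS
    exact ⟨fun _ => A, fun _ => hA, rfl⟩
  | cons A L ih =>
    obtain ⟨Y, hY, hp⟩ := ih fun B hB => hL B (List.mem_cons_of_mem _ hB)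
    refine ⟨fun k => if k < L.length then Y k else A, fun k => ?_, ?_⟩
    · dsimp only
      split_ifs
      · exact hY k
      · exact hL A List.mem_cons_self
    · rw [List.length_cons, cocycle, List.prod_cons, ← hp]
      simp only [lt_irrefl, if_false]
      congr 1
      exact cocycle_congr fun i hi => by simp [hi]

theorem exists_transfer_of_supp {E a : ℝ} {ψ : ℝ → ℝ} (hψ : ContDiff ℝ (⊤ : ℕ∞) ψ)
    (hs : tsupport ψ ⊆ Ioo 0 a) : ∃ B, IsTransfer (fun x => ψ x - E) a B := by
  obtain ⟨C, hC0, hC⟩ := exists_bound_of_zero_off ψ hψ.continuous 0 a (fun x hx =>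
    image_eq_zero_of_notMem_tsupport fun h => hx (Ioo_subset_Icc_self (hs h)))
  refine exists_isTransfer _ (hψ.continuous.sub continuous_const) (C + |E|) (fun x => ?_) a
  exact (abs_sub _ _).trans (by gcongr; exact hC x)

/-- A word of smooth potentials, each repeated `n` times, can be perturbed, after a suitable
number of repetitions of the word, to one with hyperbolic monodromy at energy `E`. Only the first
letter of each copy of the word is perturbed. -/
theorem exists_hyperbolic_word (E a : ℝ) (ha : 0 < a) (n : ℕ) (hn : 0 < n) (m : ℕ) (hm : 0 < m)
    (ψ₀ : ℕ → ℝ → ℝ) (hψ₀ : ∀ i, ContDiff ℝ (⊤ : ℕ∞) (ψ₀ i)) (hs₀ : ∀ i, tsupport (ψ₀ i) ⊆ Ioo 0 a)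
    (ε : ℝ) (hε : 0 < ε) :
    ∃ K : ℕ, 0 < K ∧ ∃ (ψ : ℕ → ℝ → ℝ) (B : ℕ → Mat2), (∀ j, ContDiff ℝ (⊤ : ℕ∞) (ψ j)) ∧
      (∀ j, tsupport (ψ j) ⊆ Ioo 0 a) ∧ (∀ j x, |ψ j x - ψ₀ (j % m) x| ≤ ε) ∧
      (∀ j, IsTransfer (fun x => ψ j x - E) a (B j)) ∧
      2 < |(cocycle (fun j => B j ^ n) (m * K)).trace| := by
  choose B₀ hB₀ using fun i => exists_transfer_of_supp (E := E) (hψ₀ i) (hs₀ i)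
  let P : Mat2 := cocycle (fun r => B₀ (r + 1) ^ n) (m - 1)
  have hP : P.det = 1 := cocycle_det (fun i => by rw [Matrix.det_pow, (hB₀ _).det, one_pow]) _
  let Ω := nearTransfers E a (ψ₀ 0) ε
  have hΩ0 : B₀ 0 ∈ Ω := ⟨ψ₀ 0, hψ₀ 0, hs₀ 0, ⟨0, hε, by simp⟩, hB₀ 0⟩
  have hΩdet : ∀ X ∈ Ω, X.det = 1 := by
    rintro X ⟨ψ, -, -, -, h⟩
    exact h.det
  let S : Set Mat2 := (fun X => P * X ^ n) '' Ω
  obtain ⟨L, hL, htr⟩ := exists_hyperbolic_prod S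
    (by
      rintro _ ⟨X, hX, rfl⟩
      simp only [Matrix.det_mul, Matrix.det_pow, hP, hΩdet X hX, one_pow, one_mul])
    (by
      intro C hC
      have hCP : C * P = 0 := by
        refine pow_spanning Ω n hn (B₀ 0) hΩ0 hΩdet (fun X hX => nearTransfers_shU ha hX)
          (fun X hX => nearTransfers_shL ha hX) (C * P) fun X hX => ?_
        have := hC _ ⟨X, hX, rfl⟩
        rw [← this, ← mul_assoc, Matrix.trace_mul_comm, ← mul_assoc]
      have hu : IsUnit P.det := by rw [hP]; exact isUnit_one
      calc C = C * P * P⁻¹ := by rw [mul_assoc, Matrix.mul_nonsing_inv _ hu, mul_one]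
        _ = 0 := by rw [hCP, zero_mul])
  obtain ⟨Y, hY, hYL⟩ := cocycle_of_list S ⟨_, _, hΩ0, rfl⟩ L hL
  choose X hX hXY using hY
  choose ψ₁ hs1 hs2 hs3 hs4 using hX
  refine ⟨L.length, ?_, fun j => if j % m = 0 then ψ₁ (j / m) else ψ₀ (j % m),
    fun j => if j % m = 0 then X (j / m) else B₀ (j % m), ?_, ?_, ?_, ?_, ?_⟩
  · rcases Nat.eq_zero_or_pos L.length with h | h
    · rw [List.length_eq_zero_iff] at h
      subst h
      norm_num [Matrix.trace_one] at htr
    · exact h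
  · intro j
    dsimp only
    split_ifs
    · exact hs1 _
    · exact hψ₀ _
  · intro j
    dsimp only
    split_ifs
    · exact hs2 _
    · exact hs₀ _
  · intro j x
    dsimp only
    split_ifs with h
    · obtain ⟨ε₁, h1, h2⟩ := hs3 (j / m)
      rw [h]
      exact (h2 x).trans h1.le
    · simpa using hε.le
  · intro j
    dsimp only
    split_ifs
    · exact hs4 _
    · exact hB₀ _
  · rw [cocycle_mul]
    rw [← hYL] at htr
    refine lt_of_lt_of_eq htr ?_
    congr 2
    refine cocycle_congr fun i _ => ?_
    rw [← hXY i]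
    obtain ⟨m', rfl⟩ : ∃ m', m = 1 + m' := ⟨m - 1, by omega⟩
    rw [cocycle_add]
    simp only [P, cocycle, mul_one]
    have hd : ((1 + m') * i + 0) % (1 + m') = 0 := by simp
    have hq : ((1 + m') * i + 0) / (1 + m') = i := by simp
    rw [if_pos hd, hq]
    congr 1
    rw [show 1 + m' - 1 = m' by omega]
    refine cocycle_congr fun r hr => ?_
    have : ((1 + m') * i + (1 + r)) % (1 + m') = r + 1 := by
      rw [Nat.mul_add_mod, Nat.mod_eq_of_lt (by omega), add_comm]
    rw [this, if_neg (by omega)]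

/-! ### Gluing potentials -/

/-- The function equal to `P k (t - k a)` on `[ka, (k+1)a)`, for every integer `k`. -/
def glue (a : ℝ) (P : ℤ → ℝ → ℝ) : ℝ → ℝ := fun t => P ⌊t / a⌋ (t - ⌊t / a⌋ * a)

theorem glue_apply_Ico {a : ℝ} (ha : 0 < a) (P : ℤ → ℝ → ℝ) (k : ℤ) {t : ℝ} (ht : t ∈ Ico 0 a) :
    glue a P (k * a + t) = P k t := by
  have h : ⌊(k * a + t) / a⌋ = k := by
    rw [Int.floor_eq_iff, le_div_iff₀ ha, div_lt_iff₀ ha]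
    constructor <;> nlinarith [ht.1, ht.2]
  unfold glue
  rw [h, add_sub_cancel_left]

theorem eq_zero_of_notMem_Ioo {a : ℝ} {f : ℝ → ℝ} (hf : tsupport f ⊆ Ioo 0 a) {t : ℝ}
    (ht : t ∉ Ioo 0 a) : f t = 0 :=
  image_eq_zero_of_notMem_tsupport fun h => ht (hf h)

theorem glue_apply {a : ℝ} (ha : 0 < a) {P : ℤ → ℝ → ℝ} (hs : ∀ k, tsupport (P k) ⊆ Ioo 0 a)
    (k : ℤ) {t : ℝ} (ht : t ∈ Icc 0 a) : glue a P (k * a + t) = P k t := by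
  rcases ht.2.lt_or_eq with h | h
  · exact glue_apply_Ico ha P k ⟨ht.1, h⟩
  · have := glue_apply_Ico ha P (k + 1) (t := 0) ⟨le_rfl, ha⟩
    rw [eq_zero_of_notMem_Ioo (hs _) (by simp)] at this
    rw [h, eq_zero_of_notMem_Ioo (hs _) (by simp), ← this]
    congr 1; push_cast; ring

theorem glue_contDiff {a : ℝ} (ha : 0 < a) {P : ℤ → ℝ → ℝ} (hs : ∀ k, tsupport (P k) ⊆ Ioo 0 a)
    (hP : ∀ k, ContDiff ℝ (⊤ : ℕ∞) (P k)) : ContDiff ℝ (⊤ : ℕ∞) (glue a P) := by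
  rw [contDiff_iff_contDiffAt]
  intro x
  set k := ⌊x / a⌋ with hk
  have h1 : k * a ≤ x := by rw [← le_div_iff₀ ha]; exact Int.floor_le _
  have h2 : x < (k + 1) * a := by rw [← div_lt_iff₀ ha]; exact Int.lt_floor_add_one _
  have key : glue a P =ᶠ[nhds x]
      fun y => P (k - 1) (y - (k - 1) * a) + P k (y - k * a) := by
    filter_upwards [Ioo_mem_nhds (show (k - 1) * a < x by nlinarith) h2] with y hy
    rcases lt_or_ge y (k * a) with h | h
    · have := glue_apply ha hs (k - 1) (t := y - (k - 1) * a)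
        ⟨by linarith [hy.1], by nlinarith [hy.2]⟩
      rw [eq_zero_of_notMem_Ioo (hs k) (t := y - k * a) fun h' => by linarith [h'.1], add_zero,
        ← this]
      congr 1; push_cast; ring
    · have := glue_apply ha hs k (t := y - k * a)
        ⟨by linarith [hy.1], by nlinarith [hy.2]⟩
      rw [eq_zero_of_notMem_Ioo (hs (k - 1)) (t := y - (k - 1) * a)
        fun h' => by nlinarith [h'.2], zero_add, ← this]
      congr 1; ring
  refine ContDiffAt.congr_of_eventuallyEq ?_ key
  have := hP (k - 1)
  have := hP k
  exact ContDiff.contDiffAt (by fun_prop)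

theorem glue_periodic {a : ℝ} (ha : 0 < a) {P : ℤ → ℝ → ℝ} (N : ℕ) (hP : ∀ k, P (k + N) = P k) :
    Function.Periodic (glue a P) (N * a) := by
  intro t
  have : ⌊(t + N * a) / a⌋ = ⌊t / a⌋ + N := by
    rw [add_div, mul_div_cancel_right₀ _ ha.ne', Int.floor_add_natCast]
  unfold glue
  rw [this, hP]
  congr 1; push_cast; ring

theorem glue_isTransfer {a : ℝ} (ha : 0 < a) {P : ℤ → ℝ → ℝ} (hs : ∀ k, tsupport (P k) ⊆ Ioo 0 a)
    (hP : ∀ k, ContDiff ℝ (⊤ : ℕ∞) (P k)) (K : ℝ) (hK : ∀ x, |glue a P x| ≤ K) (E : ℝ)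
    (B : ℕ → Mat2) (hB : ∀ k : ℕ, IsTransfer (fun x => P k x - E) a (B k)) (N : ℕ) :
    IsTransfer (fun x => glue a P x - E) (N * a) (cocycle B N) := by
  have hc := (glue_contDiff ha hs hP).continuous
  have hb : ∀ x, |glue a P x - E| ≤ K + |E| := fun x =>
    (abs_sub _ _).trans (by gcongr; exact hK x)
  obtain ⟨c, c', hc, h1, h2⟩ := exists_isSol _ (hc.sub (continuous_const (y := E))) _ hb 1 0
  obtain ⟨s, s', hs', h3, h4⟩ := exists_isSol _
    ((glue_contDiff ha hs hP).continuous.sub (continuous_const (y := E))) _ hb 0 1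
  refine ⟨c, c', s, s', hc, hs', h1, h2, h3, h4, ?_⟩
  induction N with
  | zero =>
    ext i j
    fin_cases i <;> fin_cases j <;> simp [cocycle, h1, h2, h3, h4]
  | succ N ih =>
    have hag : ∀ t ∈ Icc 0 a, glue a P (N * a + t) - E = P N t - E := fun t ht => by
      have := glue_apply ha hs N ht
      push_cast at this
      rw [this]
    have e1 := (hB N).apply hc ha.le (x₀ := N * a) hag
    have e2 := (hB N).apply hs' ha.le (x₀ := N * a) hag
    have e3 : ((N + 1 : ℕ) : ℝ) * a = N * a + a := by push_cast; ring
    rw [e3, e1.1, e1.2, e2.1, e2.2, cocycle, ih]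
    ext i j
    fin_cases i <;> fin_cases j <;> simp [Matrix.mul_apply, Fin.sum_univ_two]

/-! ### Floquet solutions -/

/-- A hyperbolic element of `SL(2,ℝ)` with trace `T` has an eigenvalue inside the unit circle. -/
theorem exists_small_eigenvalue (T : ℝ) (hT : 2 < |T|) :
    ∃ μ : ℝ, μ ≠ 0 ∧ |μ| < 1 ∧ μ ^ 2 - T * μ + 1 = 0 := by
  have hT2 : 0 < T ^ 2 - 4 := by
    have := sq_abs T
    nlinarith
  set d := √(T ^ 2 - 4) with hd
  have hd0 : 0 < d := Real.sqrt_pos.2 hT2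
  have hdd : d ^ 2 = T ^ 2 - 4 := Real.sq_sqrt hT2.le
  have hrs : (T - d) / 2 * ((T + d) / 2) = 1 := by linarith
  have hr0 : (T - d) / 2 ≠ 0 := fun h => by rw [h] at hrs; norm_num at hrs
  have hs0 : (T + d) / 2 ≠ 0 := fun h => by rw [h] at hrs; norm_num at hrs
  have habs : |(T - d) / 2| * |(T + d) / 2| = 1 := by rw [← abs_mul, hrs, abs_one]
  rcases lt_trichotomy |(T - d) / 2| 1 with h | h | h
  · exact ⟨_, hr0, h, by nlinarith⟩
  · exfalso
    have h2 : ((T - d) / 2) ^ 2 = 1 := by rw [← sq_abs, h, one_pow]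
    have : (T - d) / 2 * d = 0 := by nlinarith
    rcases mul_eq_zero.1 this with h | h
    · exact hr0 h
    · exact hd0.ne' h
  · refine ⟨_, hs0, ?_, by nlinarith⟩
    by_contra hcon
    push Not at hcon
    nlinarith

/-- Uniqueness for the initial value problem, from the constancy of Wronskians. -/
theorem sol_eq_zero {q c c' s s' z z' : ℝ → ℝ} (hc : IsSol q c c') (hs : IsSol q s s')
    (h1 : c 0 = 1) (h2 : c' 0 = 0) (h3 : s 0 = 0) (h4 : s' 0 = 1) (hz : IsSol q z z')
    (h5 : z 0 = 0) (h6 : z' 0 = 0) (x : ℝ) : z x = 0 ∧ z' x = 0 := by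
  have e1 := wronskian_const_univ hz hc x
  have e2 := wronskian_const_univ hz hs x
  have e3 := wronskian_const_univ hc hs x
  rw [h5, h6] at e1 e2
  rw [h1, h2, h3, h4] at e3
  constructor
  · linear_combination (-z x) * e3 + c x * e2 - s x * e1
  · linear_combination (-z' x) * e3 + c' x * e2 - s' x * e1

/-- Solutions multiplied by `lam` over each period, for an eigenvalue `lam` of the monodromy. -/
theorem exists_floquet {q : ℝ → ℝ} {Lp : ℝ} (hLp : 0 < Lp) (hper : Function.Periodic q Lp)
    {M : Mat2} (hM : IsTransfer q Lp M) (lam : ℝ) (hlam : lam ^ 2 - M.trace * lam + 1 = 0) :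
    ∃ u u' : ℝ → ℝ, IsSol q u u' ∧ (u 0 ≠ 0 ∨ u' 0 ≠ 0) ∧
      ∀ x, u (x + Lp) = lam * u x ∧ u' (x + Lp) = lam * u' x := by
  have hdet := hM.det
  have hM' := hM
  obtain ⟨c, c', s, s', hc, hs, h1, h2, h3, h4, -⟩ := hM'
  have hsing : (M - lam • (1 : Mat2)).det = 0 := by
    rw [Matrix.det_fin_two] at hdet ⊢
    rw [Matrix.trace_fin_two] at hlam
    simp
    linarith
  obtain ⟨w, hw0, hw⟩ := Matrix.exists_mulVec_eq_zero_iff.2 hsing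
  have w0 := congrFun hw 0
  have w1 := congrFun hw 1
  simp [Matrix.mulVec, dotProduct, Fin.sum_univ_two] at w0 w1
  have hu := hc.add_smul hs (w 0) (w 1)
  set u := fun x => w 0 * c x + w 1 * s x with hudef
  set u' := fun x => w 0 * c' x + w 1 * s' x with hu'def
  have u0 : u 0 = w 0 := by simp [hudef, h1, h3]
  have u'0 : u' 0 = w 1 := by simp [hu'def, h2, h4]
  refine ⟨u, u', hu, ?_, fun x => ?_⟩
  · by_contra hcon
    push Not at hcon
    apply hw0
    ext i
    fin_cases i
    · exact u0 ▸ hcon.1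
    · exact u'0 ▸ hcon.2
  · have hshift : IsSol q (fun x => u (x + Lp)) (fun x => u' (x + Lp)) :=
      ⟨fun x => (hu.d1 (x + Lp)).comp_add_const x Lp, fun x =>
        ((hu.d2 (x + Lp)).comp_add_const x Lp).congr_deriv (by rw [hper x])⟩
    have hz := hshift.add_smul hu 1 (-lam)
    have hap := hM.apply hu hLp.le (x₀ := 0) (by simp)
    rw [zero_add] at hap
    have := sol_eq_zero hc hs h1 h2 h3 h4 hz
      (by rw [zero_add, hap.1, u0, u'0]; linarith) (by rw [zero_add, hap.2, u0, u'0]; linarith) x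
    constructor
    · linarith [this.1]
    · linarith [this.2]

theorem floquet_bound {u : ℝ → ℝ} (hu : Continuous u) {Lp : ℝ} (hLp : 0 < Lp) {lam θ : ℝ}
    (hlam : |lam| = Real.exp (θ * Lp)) (hper : ∀ x, u (x + Lp) = lam * u x) :
    ∃ C, 0 ≤ C ∧ ∀ x, |u x| ≤ C * Real.exp (θ * x) := by
  have hp : Function.Periodic (fun x => |u x| * Real.exp (-(θ * x))) Lp := by
    intro x
    simp only [hper, abs_mul, hlam]
    rw [show -(θ * (x + Lp)) = -(θ * x) + -(θ * Lp) by ring, Real.exp_add, Real.exp_neg (θ * Lp)]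
    field_simp
  have hb := hp.isBounded_of_continuous hLp.ne' (by fun_prop)
  obtain ⟨C, hC⟩ := hb.exists_norm_le
  have hC0 : 0 ≤ C := (norm_nonneg _).trans (hC _ ⟨0, rfl⟩)
  refine ⟨C, hC0, fun x => ?_⟩
  have : ‖|u x| * Real.exp (-(θ * x))‖ ≤ C := hC _ ⟨x, rfl⟩
  rw [Real.norm_of_nonneg (by positivity), Real.exp_neg, ← div_eq_mul_inv,
    div_le_iff₀ (Real.exp_pos _)] at this
  exact this

/-- An exponential dichotomy for `u'' = q u`: a solution `u` decaying to the right and a solution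
`v` decaying to the left, both at rate `γ` with the constant `C`, and with Wronskian `1`. The
fields `u'` and `v'` are the derivatives. -/
structure Dichotomy (q : ℝ → ℝ) where
  u : ℝ → ℝ
  u' : ℝ → ℝ
  v : ℝ → ℝ
  v' : ℝ → ℝ
  γ : ℝ
  C : ℝ
  hu : IsSol q u u'
  hv : IsSol q v v'
  γ_pos : 0 < γ
  C_nonneg : 0 ≤ C
  wronskian : ∀ x, u x * v' x - u' x * v x = 1
  u_le : ∀ x, |u x| ≤ C * Real.exp (-(γ * x))
  u'_le : ∀ x, |u' x| ≤ C * Real.exp (-(γ * x))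
  v_le : ∀ x, |v x| ≤ C * Real.exp (γ * x)
  v'_le : ∀ x, |v' x| ≤ C * Real.exp (γ * x)

/-- Hyperbolic monodromy gives an exponential dichotomy: the Floquet solutions for the eigenvalues
`μ` and `μ⁻¹`, normalised to have Wronskian `1`. -/
theorem exists_dichotomy {q : ℝ → ℝ} {Lp : ℝ} (hLp : 0 < Lp) (hper : Function.Periodic q Lp)
    {M : Mat2} (hM : IsTransfer q Lp M) (htr : 2 < |M.trace|) : Nonempty (Dichotomy q) := by
  obtain ⟨μ, hμ0, hμ1, hμ⟩ := exists_small_eigenvalue _ htr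
  have hμ' : μ⁻¹ ^ 2 - M.trace * μ⁻¹ + 1 = 0 := by field_simp; linarith
  obtain ⟨u, u', hu, hu0, hul⟩ := exists_floquet hLp hper hM μ hμ
  obtain ⟨v, v', hv, hv0, hvl⟩ := exists_floquet hLp hper hM μ⁻¹ hμ'
  have hne : μ - μ⁻¹ ≠ 0 := by
    intro h
    have : μ ^ 2 = 1 := by field_simp at h; linarith
    have := sq_abs μ
    nlinarith [abs_nonneg μ]
  have hW : u 0 * v' 0 - u' 0 * v 0 ≠ 0 := by
    intro hW
    have a1 := hM.apply hu hLp.le (x₀ := 0) (by simp)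
    have a2 := hM.apply hv hLp.le (x₀ := 0) (by simp)
    rw [(hul 0).1, (hul 0).2] at a1
    rw [(hvl 0).1, (hvl 0).2] at a2
    obtain ⟨b1, b2⟩ := a1
    obtain ⟨b3, b4⟩ := a2
    have p1 : (μ - μ⁻¹) * (u 0 * v 0) = 0 := by
      linear_combination v 0 * b1 - u 0 * b3 - M 0 1 * hW
    have p2 : (μ - μ⁻¹) * (u' 0 * v' 0) = 0 := by
      linear_combination v' 0 * b2 - u' 0 * b4 + M 1 0 * hW
    have p3 : (μ - μ⁻¹) * (u 0 * v' 0) = 0 := by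
      linear_combination v' 0 * b1 - u' 0 * b3 + (M 0 0 - μ⁻¹) * hW
    have p4 : (μ - μ⁻¹) * (u' 0 * v 0) = 0 := by
      linear_combination p3 - (μ - μ⁻¹) * hW
    simp only [mul_eq_zero, hne, false_or] at p1 p2 p3 p4
    tauto
  set W := u 0 * v' 0 - u' 0 * v 0 with hWdef
  set γ := -Real.log |μ| / Lp with hγ
  have hμpos : 0 < |μ| := abs_pos.2 hμ0
  have hγpos : 0 < γ := div_pos (neg_pos.2 (Real.log_neg hμpos hμ1)) hLp
  have hγL : γ * Lp = -Real.log |μ| := by rw [hγ]; field_simp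
  have e1 : |μ| = Real.exp (-γ * Lp) := by rw [neg_mul, hγL, neg_neg, Real.exp_log hμpos]
  have e2 : |μ⁻¹| = Real.exp (γ * Lp) := by rw [hγL, Real.exp_neg, Real.exp_log hμpos, abs_inv]
  have cont : ∀ {w w' : ℝ → ℝ}, IsSol q w w' → Continuous w ∧ Continuous w' := fun h =>
    ⟨continuous_iff_continuousAt.2 fun x => (h.d1 x).continuousAt,
      continuous_iff_continuousAt.2 fun x => (h.d2 x).continuousAt⟩
  have hv2 := hv.add_smul hv W⁻¹ 0
  obtain ⟨C1, p1, k1⟩ := floquet_bound (cont hu).1 hLp e1 fun x => (hul x).1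
  obtain ⟨C2, p2, k2⟩ := floquet_bound (cont hu).2 hLp e1 fun x => (hul x).2
  obtain ⟨C3, p3, k3⟩ := floquet_bound (cont hv2).1 hLp e2 fun x => by
    simp only [(hvl x).1]; ring
  obtain ⟨C4, p4, k4⟩ := floquet_bound (cont hv2).2 hLp e2 fun x => by
    simp only [(hvl x).2]; ring
  have hle : ∀ {c y t : ℝ}, y ≤ c * Real.exp t → c ≤ C1 + C2 + C3 + C4 →
      y ≤ (C1 + C2 + C3 + C4) * Real.exp t := fun h1 h2 => h1.trans (by gcongr)
  refine ⟨⟨u, u', _, _, γ, C1 + C2 + C3 + C4, hu, hv2, hγpos, by positivity, fun x => ?_,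
    fun x => ?_, fun x => ?_, fun x => hle (k3 x) (by linarith), fun x => hle (k4 x) (by linarith)⟩⟩
  · have := wronskian_const_univ hu hv x
    rw [← hWdef] at this
    field_simp
    linear_combination this
  · exact hle (by simpa using k1 x) (by linarith)
  · exact hle (by simpa using k2 x) (by linarith)

/-! ### A priori estimate -/

theorem integrable_sq {w : ℝ → ℝ} (hw : Continuous w) (hs : HasCompactSupport w) :
    Integrable fun x => w x ^ 2 := by
  have : Integrable fun x => w x * w x := (hw.mul hw).integrable_of_hasCompactSupport hs.mul_left
  simpa only [sq] using this

/-- If `α' = κ α + g` and `α` has compact support, then `‖α‖₂ ≤ ‖g‖₂ / |κ|`; here `g` is dominated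
by `C |f|`. -/
theorem energy_le {α g f : ℝ → ℝ} {κ C : ℝ} (hκ : κ ≠ 0)
    (hd : ∀ x, HasDerivAt α (κ * α x + g x) x) (hα : HasCompactSupport α)
    (hg : Continuous g) (hgs : HasCompactSupport g)
    (hf : Continuous f) (hfs : HasCompactSupport f) (hgf : ∀ x, |g x| ≤ C * |f x|) :
    ∫ x, α x ^ 2 ≤ C ^ 2 / κ ^ 2 * ∫ x, f x ^ 2 := by
  have hαc : Continuous α := continuous_iff_continuousAt.2 fun x => (hd x).continuousAt
  have iα := integrable_sq hαc hα
  have ig := integrable_sq hg hgs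
  have jf := integrable_sq hf hfs
  have iαg : Integrable fun x => α x * g x :=
    (hαc.mul hg).integrable_of_hasCompactSupport hα.mul_right
  have h0 : ∫ x, (2 * κ * α x ^ 2 + 2 * (α x * g x)) = 0 :=
    integral_eq_zero_of_hasDerivAt_of_integrable (f := fun x => α x ^ 2)
      (fun x => ((hd x).pow 2).congr_deriv (by simp; ring)) ((iα.const_mul _).add (iαg.const_mul _)) iα
  rw [integral_add (iα.const_mul _) (iαg.const_mul _), integral_const_mul, integral_const_mul] at h0
  have h1 : ∫ x, -2 * κ * (α x * g x) ≤ ∫ x, (κ ^ 2 * α x ^ 2 + g x ^ 2) :=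
    integral_mono (iαg.const_mul _) ((iα.const_mul _).add ig) fun x => by
      dsimp only; nlinarith [sq_nonneg (κ * α x + g x)]
  rw [integral_add (iα.const_mul _) ig, integral_const_mul, integral_const_mul] at h1
  have h2 : ∫ x, g x ^ 2 ≤ ∫ x, C ^ 2 * f x ^ 2 :=
    integral_mono ig (jf.const_mul _) fun x => by
      dsimp only
      rw [← sq_abs (g x), ← sq_abs (f x), ← mul_pow]
      exact pow_le_pow_left₀ (abs_nonneg _) (hgf x) 2
  rw [integral_const_mul] at h2
  rw [div_mul_eq_mul_div, le_div_iff₀ (by positivity)]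
  have h3 : -2 * κ * ∫ x, α x * g x = 2 * κ ^ 2 * ∫ x, α x ^ 2 := by
    linear_combination (-κ) * h0
  linarith

/-- A test function: smooth with compact support. -/
def IsTest (φ : ℝ → ℝ) : Prop := ContDiff ℝ (⊤ : ℕ∞) φ ∧ HasCompactSupport φ

theorem IsTest.deriv {φ : ℝ → ℝ} (h : IsTest φ) : IsTest (deriv φ) :=
  ⟨contDiff_deriv_of_contDiff h.1, h.2.deriv⟩

theorem IsTest.hasDerivAt {φ : ℝ → ℝ} (h : IsTest φ) (x : ℝ) : HasDerivAt φ (_root_.deriv φ x) x :=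
  (h.1.differentiable (by simp) x).hasDerivAt

/-- The Schrödinger expression `-φ'' + q φ`. -/
def schr (q φ : ℝ → ℝ) : ℝ → ℝ := fun x => -(deriv (deriv φ) x) + q x * φ x

theorem IsTest.schr {q φ : ℝ → ℝ} (hq : ContDiff ℝ (⊤ : ℕ∞) q) (h : IsTest φ) : IsTest (schr q φ) := by
  refine ⟨?_, ?_⟩
  · have h1 := h.1
    have h2 := h.deriv.deriv.1
    unfold _root_.schr
    fun_prop
  · exact h.deriv.deriv.2.neg.add h.2.mul_left

/-- An exponential dichotomy makes the Schrödinger expression bounded below on test functions.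
With `α = e^{γx} (u φ' - u' φ)` and `β = e^{-γx} (v φ' - v' φ)`, variation of constants gives
first order equations for `α` and `β`, and `φ = (e^{-γx} v) α - (e^{γx} u) β`. -/
theorem coercive {q : ℝ → ℝ} (hq : ContDiff ℝ (⊤ : ℕ∞) q) (D : Dichotomy q) {φ : ℝ → ℝ}
    (hφ : IsTest φ) :
    ∫ x, φ x ^ 2 ≤ (2 * D.C ^ 2 / D.γ) ^ 2 * ∫ x, schr q φ x ^ 2 := by
  obtain ⟨u, u', v, v', γ, C, hu, hv, hγ, hC, hW, bu, bu', bv, bv'⟩ := D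
  dsimp only
  set f := schr q φ with hf
  have tf : IsTest f := hφ.schr hq
  set φ1 := deriv φ with e1
  set φ2 := deriv φ1 with e2
  have t1 : IsTest φ1 := hφ.deriv
  have d0 : ∀ x, HasDerivAt φ (φ1 x) x := hφ.hasDerivAt
  have d1 : ∀ x, HasDerivAt φ1 (φ2 x) x := t1.hasDerivAt
  have hfx : ∀ x, f x = -φ2 x + q x * φ x := fun x => rfl
  have cu := (hu.contDiff hq).continuous
  have cv := (hv.contDiff hq).continuous
  have dexp : ∀ κ x : ℝ, HasDerivAt (fun x => Real.exp (κ * x)) (κ * Real.exp (κ * x)) x := by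
    intro κ x
    exact (((hasDerivAt_id x).const_mul κ).exp).congr_deriv (by simp; ring)
  have key : ∀ (w w' : ℝ → ℝ) (κ : ℝ), κ ≠ 0 → IsSol q w w' → Continuous w →
      (∀ x, |w x| ≤ C * Real.exp (-(κ * x))) →
      HasCompactSupport (fun x => Real.exp (κ * x) * (w x * φ1 x - w' x * φ x)) ∧
      Continuous (fun x => Real.exp (κ * x) * (w x * φ1 x - w' x * φ x)) ∧
      ∫ x, (Real.exp (κ * x) * (w x * φ1 x - w' x * φ x)) ^ 2 ≤ C ^ 2 / κ ^ 2 * ∫ x, f x ^ 2 := by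
    intro w w' κ hκ hw cw bw
    have hsupp : HasCompactSupport (fun x => Real.exp (κ * x) * (w x * φ1 x - w' x * φ x)) :=
      (t1.2.mul_left.sub hφ.2.mul_left).mul_left
    have hder : ∀ x, HasDerivAt (fun x => Real.exp (κ * x) * (w x * φ1 x - w' x * φ x))
      (κ * (Real.exp (κ * x) * (w x * φ1 x - w' x * φ x)) + -(Real.exp (κ * x) * w x * f x)) x := by
      intro x
      refine ((dexp κ x).mul (((hw.d1 x).mul (d1 x)).sub ((hw.d2 x).mul (d0 x)))).congr_deriv ?_
      simp only [hfx, Pi.sub_apply, Pi.mul_apply]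
      ring
    refine ⟨hsupp, continuous_iff_continuousAt.2 fun x => (hder x).continuousAt, ?_⟩
    refine energy_le hκ hder hsupp ?_ ?_ tf.1.continuous tf.2 ?_
    · have := tf.1.continuous
      fun_prop
    · exact tf.2.mul_left.neg
    · intro x
      rw [abs_neg, abs_mul, abs_mul, abs_of_pos (Real.exp_pos _)]
      gcongr
      calc Real.exp (κ * x) * |w x| ≤ Real.exp (κ * x) * (C * Real.exp (-(κ * x))) := by
            gcongr; exact bw x
        _ = C := by rw [Real.exp_neg]; field_simp
  obtain ⟨s1, c1, k1⟩ := key u u' γ hγ.ne' hu cu bu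
  obtain ⟨s2, c2, k2⟩ := key v v' (-γ) (neg_ne_zero.2 hγ.ne') hv cv (fun x => by simpa using bv x)
  set α := fun x => Real.exp (γ * x) * (u x * φ1 x - u' x * φ x) with hα
  set β := fun x => Real.exp (-γ * x) * (v x * φ1 x - v' x * φ x) with hβ
  have i1 := integrable_sq c1 s1
  have i2 := integrable_sq c2 s2
  have hφαβ : ∀ x, φ x ^ 2 ≤ 2 * C ^ 2 * (α x ^ 2 + β x ^ 2) := by
    intro x
    have hee : Real.exp (-γ * x) * Real.exp (γ * x) = 1 := by
      rw [← Real.exp_add]; simp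
    have e : φ x = (Real.exp (-γ * x) * v x) * α x - (Real.exp (γ * x) * u x) * β x := by
      simp only [hα, hβ]
      linear_combination (-(φ x)) * hW x - φ x * (u x * v' x - u' x * v x) * hee
    have m1 : (Real.exp (-γ * x) * v x) ^ 2 ≤ C ^ 2 := by
      rw [sq_le_sq, abs_mul, abs_of_nonneg hC, abs_of_pos (Real.exp_pos _)]
      calc Real.exp (-γ * x) * |v x| ≤ Real.exp (-γ * x) * (C * Real.exp (γ * x)) := by
            gcongr; exact bv x
        _ = C := by linear_combination C * hee
    have m2 : (Real.exp (γ * x) * u x) ^ 2 ≤ C ^ 2 := by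
      rw [sq_le_sq, abs_mul, abs_of_nonneg hC, abs_of_pos (Real.exp_pos _)]
      calc Real.exp (γ * x) * |u x| ≤ Real.exp (γ * x) * (C * Real.exp (-(γ * x))) := by
            gcongr; exact bu x
        _ = C := by rw [← neg_mul]; linear_combination C * hee
    rw [e]
    nlinarith [sq_nonneg ((Real.exp (-γ * x) * v x) * α x + (Real.exp (γ * x) * u x) * β x),
      mul_le_mul_of_nonneg_right m1 (sq_nonneg (α x)), mul_le_mul_of_nonneg_right m2 (sq_nonneg (β x))]
  calc ∫ x, φ x ^ 2 ≤ ∫ x, 2 * C ^ 2 * (α x ^ 2 + β x ^ 2) :=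
        integral_mono (integrable_sq hφ.1.continuous hφ.2) ((i1.add i2).const_mul _) hφαβ
    _ = 2 * C ^ 2 * ((∫ x, α x ^ 2) + ∫ x, β x ^ 2) := by
        rw [integral_const_mul, integral_add i1 i2]
    _ ≤ 2 * C ^ 2 * (C ^ 2 / γ ^ 2 * (∫ x, f x ^ 2) + C ^ 2 / (-γ) ^ 2 * ∫ x, f x ^ 2) := by
        gcongr
    _ = _ := by rw [neg_sq]; field_simp; ring

/-! ### Density of the range -/

theorem memLp_of_exp_bound {w : ℝ → ℝ} (hw : Continuous w) {K γ : ℝ} (hγ : 0 < γ)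
    (h : ∀ x, |w x| ≤ K * Real.exp (-(γ * |x|))) : MemLp w 2 (volume : Measure ℝ) := by
  rw [memLp_two_iff_integrable_sq hw.aestronglyMeasurable]
  have hint : Integrable (fun x : ℝ => Real.exp (-(2 * γ) * |x|)) := by
    rw [← integrableOn_univ, ← Iic_union_Ioi (a := (0 : ℝ))]
    refine IntegrableOn.union ?_ ?_
    · refine (integrableOn_exp_mul_Iic (a := 2 * γ) (by positivity) 0).congr_fun ?_ measurableSet_Iic
      intro x hx
      simp only [abs_of_nonpos (mem_Iic.1 hx)]
      congr 1; ring
    · refine (integrableOn_exp_mul_Ioi (a := -(2 * γ)) (by linarith) 0).congr_fun ?_ measurableSet_Ioi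
      intro x hx
      simp only [abs_of_pos (mem_Ioi.1 hx)]
  refine (hint.const_mul (K ^ 2)).mono' (hw.pow 2).aestronglyMeasurable (.of_forall fun x => ?_)
  rw [Real.norm_of_nonneg (sq_nonneg _), ← sq_abs (w x)]
  calc |w x| ^ 2 ≤ (K * Real.exp (-(γ * |x|))) ^ 2 := pow_le_pow_left₀ (abs_nonneg _) (h x) 2
    _ = _ := by rw [mul_pow, ← Real.exp_nat_mul]; congr 2; push_cast; ring

theorem exp_half_line_le {γ R x : ℝ} (hγ : 0 < γ) (hR : 0 ≤ R) (hx : x ≤ R) :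
    Real.exp (γ * x) ≤ Real.exp (2 * γ * R) * Real.exp (-(γ * |x|)) := by
  rw [← Real.exp_add, Real.exp_le_exp]
  rcases le_total 0 x with h | h
  · rw [abs_of_nonneg h]; nlinarith
  · rw [abs_of_nonpos h]; nlinarith [mul_nonneg hγ.le hR]

/-- Variation of constants: for a test function `f`, the equation `-φ'' + q φ = f` has a solution
`φ = a v - b u` that is square integrable together with its derivative. -/
theorem exists_green {q : ℝ → ℝ} (hq : ContDiff ℝ (⊤ : ℕ∞) q) (D : Dichotomy q) {f : ℝ → ℝ}
    (hf : IsTest f) :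
    ∃ φ φ' : ℝ → ℝ, ContDiff ℝ (⊤ : ℕ∞) φ ∧ (∀ x, HasDerivAt φ (φ' x) x) ∧
      (∀ x, HasDerivAt φ' (q x * φ x - f x) x) ∧ MemLp φ 2 (volume : Measure ℝ) ∧
      MemLp φ' 2 (volume : Measure ℝ) := by
  obtain ⟨u, u', v, v', γ, C, hu, hv, hγ, hC, hW, bu, bu', bv, bv'⟩ := D
  have cu := hu.contDiff hq
  have cv := hv.contDiff hq
  have cu' := hu.contDiff' hq
  have cv' := hv.contDiff' hq
  have cf := hf.1
  obtain ⟨R, hR0, hR⟩ : ∃ R, 0 ≤ R ∧ ∀ x, f x ≠ 0 → |x| < R := by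
    obtain ⟨R, hR⟩ := hf.2.isBounded.exists_norm_le
    exact ⟨|R| + 1, by positivity, fun x hx =>
      ((hR x (subset_tsupport f hx)).trans (le_abs_self R)).trans_lt (by linarith)⟩
  have huf : Continuous fun x => u x * f x := (cu.mul cf).continuous
  have hvf : Continuous fun x => v x * f x := (cv.mul cf).continuous
  let a : ℝ → ℝ := fun x => -∫ t in R..x, u t * f t
  let b : ℝ → ℝ := fun x => -∫ t in (-R)..x, v t * f t
  have da : ∀ x, HasDerivAt a (-(u x * f x)) x := fun x => (huf.integral_hasStrictDerivAt R x).hasDerivAt.neg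
  have db : ∀ x, HasDerivAt b (-(v x * f x)) x := fun x => (hvf.integral_hasStrictDerivAt (-R) x).hasDerivAt.neg
  have ca : ContDiff ℝ (⊤ : ℕ∞) a := by
    refine contDiff_infty_iff_deriv.2 ⟨fun x => (da x).differentiableAt, ?_⟩
    rw [show deriv a = fun x => -(u x * f x) from funext fun x => (da x).deriv]
    fun_prop
  have cb : ContDiff ℝ (⊤ : ℕ∞) b := by
    refine contDiff_infty_iff_deriv.2 ⟨fun x => (db x).differentiableAt, ?_⟩
    rw [show deriv b = fun x => -(v x * f x) from funext fun x => (db x).deriv]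
    fun_prop
  have za : ∀ x, R < x → a x = 0 := by
    intro x hx
    have : ∫ t in R..x, u t * f t = ∫ t in R..x, (0 : ℝ) := by
      apply intervalIntegral.integral_congr_ae
      filter_upwards with t ht
      rw [uIoc_of_le hx.le] at ht
      by_contra hne
      have := hR t (fun h => hne (by simp [h]))
      linarith [le_abs_self t, ht.1]
    simp [a, this]
  have zb : ∀ x, x < -R → b x = 0 := by
    intro x hx
    have : ∫ t in (-R)..x, v t * f t = ∫ t in (-R)..x, (0 : ℝ) := by
      apply intervalIntegral.integral_congr_ae
      filter_upwards with t ht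
      rw [uIoc_of_ge hx.le] at ht
      by_contra hne
      have := hR t (fun h => hne (by simp [h]))
      linarith [neg_abs_le t, ht.2]
    simp [b, this]
  have bdd : ∀ w : ℝ → ℝ, Continuous w → ∀ r, ∃ A, 0 ≤ A ∧ ∀ x, |-∫ t in r..x, w t * f t| ≤ A := by
    intro w hw r
    have hi : Integrable fun x => ‖w x * f x‖ :=
      ((hw.mul cf.continuous).integrable_of_hasCompactSupport hf.2.mul_left).norm
    refine ⟨∫ x, ‖w x * f x‖, integral_nonneg fun x => norm_nonneg _, fun x => ?_⟩
    rw [abs_neg]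
    exact intervalIntegral.norm_integral_le_integral_norm_uIoc.trans
      (setIntegral_le_integral hi (.of_forall fun x => norm_nonneg _))
  obtain ⟨A, hA0, hA⟩ := bdd u cu.continuous R
  obtain ⟨B, hB0, hB⟩ := bdd v cv.continuous (-R)
  have estA : ∀ (w : ℝ → ℝ), (∀ x, |w x| ≤ C * Real.exp (γ * x)) → ∀ x,
      |w x * a x| ≤ C * A * Real.exp (2 * γ * R) * Real.exp (-(γ * |x|)) := by
    intro w hw x
    rcases lt_or_ge R x with h | h
    · rw [za x h, mul_zero, abs_zero]; positivity
    · rw [abs_mul]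
      calc |w x| * |a x| ≤ (C * (Real.exp (2 * γ * R) * Real.exp (-(γ * |x|)))) * A := by
            gcongr
            · exact (hw x).trans (by gcongr; exact exp_half_line_le hγ hR0 h)
            · exact hA x
        _ = _ := by ring
  have estB : ∀ (w : ℝ → ℝ), (∀ x, |w x| ≤ C * Real.exp (-(γ * x))) → ∀ x,
      |w x * b x| ≤ C * B * Real.exp (2 * γ * R) * Real.exp (-(γ * |x|)) := by
    intro w hw x
    rcases lt_or_ge x (-R) with h | h
    · rw [zb x h, mul_zero, abs_zero]; positivity
    · rw [abs_mul]
      have := exp_half_line_le (x := -x) hγ hR0 (by linarith)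
      rw [abs_neg, mul_neg] at this
      calc |w x| * |b x| ≤ (C * (Real.exp (2 * γ * R) * Real.exp (-(γ * |x|)))) * B := by
            gcongr
            · exact (hw x).trans (by gcongr)
            · exact hB x
        _ = _ := by ring
  have mem : ∀ w w₁ : ℝ → ℝ, Continuous w → Continuous w₁ →
      (∀ x, |w x| ≤ C * Real.exp (γ * x)) → (∀ x, |w₁ x| ≤ C * Real.exp (-(γ * x))) →
      MemLp (fun x => w x * a x - w₁ x * b x) 2 (volume : Measure ℝ) := by
    intro w w₁ hw hw₁ h1 h2
    exact (memLp_of_exp_bound (hw.mul ca.continuous) hγ (estA w h1)).sub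
      (memLp_of_exp_bound (hw₁.mul cb.continuous) hγ (estB w₁ h2))
  refine ⟨fun x => v x * a x - u x * b x, fun x => v' x * a x - u' x * b x, by fun_prop, ?_, ?_,
    mem v u cv.continuous cu.continuous bv bu, mem v' u' cv'.continuous cu'.continuous bv' bu'⟩
  · intro x
    exact (((hv.d1 x).mul (da x)).sub ((hu.d1 x).mul (db x))).congr_deriv (by ring)
  · intro x
    refine (((hv.d2 x).mul (da x)).sub ((hu.d2 x).mul (db x))).congr_deriv ?_
    linear_combination (-f x) * hW x

/-- A square integrable function orthogonal to the range of the Schrödinger expression on test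
functions is orthogonal to every test function `f`: cut off the square integrable solution of
`-φ'' + q φ = f` at scale `k` and let `k → ∞`. -/
theorem integral_eq_zero_of_orthogonal {q : ℝ → ℝ} (hq : ContDiff ℝ (⊤ : ℕ∞) q) (D : Dichotomy q)
    {g : ℝ → ℝ} (hg : MemLp g 2 (volume : Measure ℝ))
    (h : ∀ φ, IsTest φ → ∫ x, g x * schr q φ x = 0) {f : ℝ → ℝ} (hf : IsTest f) :
    ∫ x, g x * f x = 0 := by
  obtain ⟨φ, φ', cφ, dφ, dφ', mφ, mφ'⟩ := exists_green hq D hf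
  have cφ' : Continuous φ' := continuous_iff_continuousAt.2 fun x => (dφ' x).continuousAt
  let bump : ContDiffBump (0 : ℝ) := ⟨1, 2, by norm_num, by norm_num⟩
  obtain ⟨χ, hχ, hχ1⟩ : ∃ χ : ℝ → ℝ, IsTest χ ∧ ∀ x, |x| ≤ 1 → χ x = 1 :=
    ⟨bump, ⟨bump.contDiff, bump.hasCompactSupport⟩, fun x hx =>
      bump.one_of_mem_closedBall (by simpa [bump] using hx)⟩
  set χ1 := deriv χ with e1
  set χ2 := deriv χ1 with e2
  have d0 : ∀ x, HasDerivAt χ (χ1 x) x := hχ.hasDerivAt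
  have d1 : ∀ x, HasDerivAt χ1 (χ2 x) x := hχ.deriv.hasDerivAt
  have cχ := hχ.1.continuous
  have cχ1 := hχ.deriv.1.continuous
  have cχ2 := hχ.deriv.deriv.1.continuous
  obtain ⟨K0, hK0⟩ := cχ.bounded_above_of_compact_support hχ.2
  obtain ⟨K1, hK1⟩ := cχ1.bounded_above_of_compact_support hχ.deriv.2
  obtain ⟨K2, hK2⟩ := cχ2.bounded_above_of_compact_support hχ.deriv.deriv.2
  let c : ℕ → ℝ := fun k => 1 / ((k : ℝ) + 1)
  have hc0 : ∀ k, 0 < c k := fun k => Nat.one_div_pos_of_nat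
  have hc1 : ∀ k, c k ≤ 1 := fun k => by
    simp only [c]; rw [div_le_one (by positivity)]; linarith [Nat.cast_nonneg (α := ℝ) k]
  have hclim : Filter.Tendsto c Filter.atTop (nhds 0) := tendsto_one_div_add_atTop_nhds_zero_nat
  let F : ℕ → ℝ → ℝ := fun k x =>
    g x * (χ (c k * x) * f x - 2 * c k * χ1 (c k * x) * φ' x - c k ^ 2 * χ2 (c k * x) * φ x)
  have hF : ∀ k, ∫ x, F k x = 0 := by
    intro k
    have dc : ∀ x, HasDerivAt (fun x => χ (c k * x)) (c k * χ1 (c k * x)) x := fun x =>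
      ((d0 (c k * x)).comp x ((hasDerivAt_id x).const_mul (c k))).congr_deriv (by simp; ring)
    have dc1 : ∀ x, HasDerivAt (fun x => χ1 (c k * x)) (c k * χ2 (c k * x)) x := fun x =>
      ((d1 (c k * x)).comp x ((hasDerivAt_id x).const_mul (c k))).congr_deriv (by simp; ring)
    have tt : IsTest (fun x => χ (c k * x) * φ x) := by
      refine ⟨?_, ?_⟩
      · have := hχ.1
        fun_prop
      · exact HasCompactSupport.mul_right
          (hχ.2.comp_homeomorph (Homeomorph.mulLeft₀ (c k) (hc0 k).ne'))
    rw [← h _ tt]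
    congr 1
    ext x
    have D1 : deriv (fun x => χ (c k * x) * φ x) =
        fun x => c k * χ1 (c k * x) * φ x + χ (c k * x) * φ' x :=
      funext fun x => ((dc x).mul (dφ x)).deriv
    have D2 : deriv (deriv (fun x => χ (c k * x) * φ x)) x =
        c k * (c k * χ2 (c k * x)) * φ x + c k * χ1 (c k * x) * φ' x +
        (c k * χ1 (c k * x) * φ' x + χ (c k * x) * (q x * φ x - f x)) := by
      rw [D1]
      exact ((((dc1 x).const_mul (c k)).mul (dφ x)).add ((dc x).mul (dφ' x))).deriv
    simp only [F, schr]
    rw [D2]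
    ring
  have mf : MemLp f 2 (volume : Measure ℝ) := hf.1.continuous.memLp_of_hasCompactSupport hf.2
  have igf : Integrable fun x => |g x * f x| := (hg.integrable_mul mf).abs
  have igφ : Integrable fun x => |g x * φ x| := (hg.integrable_mul mφ).abs
  have igφ' : Integrable fun x => |g x * φ' x| := (hg.integrable_mul mφ').abs
  have lim : Filter.Tendsto (fun k => ∫ x, F k x) Filter.atTop (nhds (∫ x, g x * f x)) := by
    refine tendsto_integral_of_dominated_convergence
      (fun x => K0 * |g x * f x| + 2 * K1 * |g x * φ' x| + K2 * |g x * φ x|) ?_ ?_ ?_ ?_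
    · intro k
      refine hg.1.mul (Continuous.aestronglyMeasurable ?_)
      have := hf.1.continuous
      have := cφ.continuous
      fun_prop
    · exact ((igf.const_mul _).add (igφ'.const_mul _)).add (igφ.const_mul _)
    · intro k
      refine .of_forall fun x => ?_
      have e : F k x = χ (c k * x) * (g x * f x) - 2 * c k * χ1 (c k * x) * (g x * φ' x)
          - c k ^ 2 * χ2 (c k * x) * (g x * φ x) := by simp only [F]; ring
      have n0 := hK0 (c k * x)
      have n1 := hK1 (c k * x)
      have n2 := hK2 (c k * x)
      rw [Real.norm_eq_abs] at n0 n1 n2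
      have p1 := (abs_nonneg _).trans n1
      have p2 := (abs_nonneg _).trans n2
      have hck := (hc0 k).le
      rw [e, Real.norm_eq_abs]
      refine (abs_sub _ _).trans (add_le_add ((abs_sub _ _).trans (add_le_add ?_ ?_)) ?_)
      · rw [abs_mul]; gcongr
      · rw [abs_mul, abs_mul, abs_mul, abs_two, abs_of_nonneg hck]
        have : c k * |χ1 (c k * x)| ≤ 1 * K1 := mul_le_mul (hc1 k) n1 (abs_nonneg _) zero_le_one
        have h2 : 2 * c k * |χ1 (c k * x)| ≤ 2 * K1 := by linarith
        exact mul_le_mul_of_nonneg_right h2 (abs_nonneg _)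
      · rw [abs_mul, abs_mul, abs_of_nonneg (sq_nonneg _)]
        have : c k ^ 2 * |χ2 (c k * x)| ≤ 1 * K2 :=
          mul_le_mul (pow_le_one₀ hck (hc1 k)) n2 (abs_nonneg _) zero_le_one
        rw [one_mul] at this
        exact mul_le_mul_of_nonneg_right this (abs_nonneg _)
    · refine .of_forall fun x => ?_
      have hcx : Filter.Tendsto (fun k => c k * x) Filter.atTop (nhds 0) := by
        simpa using hclim.mul_const x
      have t0 : Filter.Tendsto (fun k => χ (c k * x)) Filter.atTop (nhds 1) := by
        have := (cχ.tendsto 0).comp hcx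
        rwa [hχ1 0 (by simp)] at this
      have t1 := (cχ1.tendsto 0).comp hcx
      have t2 := (cχ2.tendsto 0).comp hcx
      have := (((t0.mul_const (f x)).sub (((hclim.const_mul 2).mul t1).mul_const (φ' x))).sub
        (((hclim.pow 2).mul t2).mul_const (φ x))).const_mul (g x)
      simpa [F] using this
  exact tendsto_nhds_unique lim (by simp [hF])

theorem ae_eq_zero_of_orthogonal {q : ℝ → ℝ} (hq : ContDiff ℝ (⊤ : ℕ∞) q) (D : Dichotomy q)
    {g : ℝ → ℝ} (hg : MemLp g 2 (volume : Measure ℝ))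
    (h : ∀ φ, IsTest φ → ∫ x, g x * schr q φ x = 0) : g =ᵐ[volume] 0 := by
  refine ae_eq_zero_of_integral_contDiff_smul_eq_zero (hg.locallyIntegrable (by norm_num)) ?_
  intro f hf hfs
  rw [← integral_eq_zero_of_orthogonal hq D hg h ⟨hf, hfs⟩]
  simp [mul_comm]

/-! ### The resolvent -/

/-- The space of test functions. -/
def testSpace : Submodule ℝ (ℝ → ℝ) where
  carrier := {φ | IsTest φ}
  add_mem' h k := ⟨h.1.add k.1, h.2.add k.2⟩
  zero_mem' := ⟨contDiff_const, HasCompactSupport.zero⟩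
  smul_mem' c _ h := ⟨contDiff_const.smul h.1, h.2.smul_left (f := fun _ => c)⟩

theorem IsTest.memLp {φ : ℝ → ℝ} (h : IsTest φ) : MemLp φ 2 (volume : Measure ℝ) :=
  h.1.continuous.memLp_of_hasCompactSupport h.2

theorem schr_add {q φ ψ : ℝ → ℝ} (h : IsTest φ) (k : IsTest ψ) :
    schr q (φ + ψ) = schr q φ + schr q ψ := by
  ext x
  have e1 : deriv (φ + ψ) = deriv φ + deriv ψ :=
    funext fun x => ((h.hasDerivAt x).add (k.hasDerivAt x)).deriv
  have e2 : deriv (deriv φ + deriv ψ) x = deriv (deriv φ) x + deriv (deriv ψ) x :=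
    ((h.deriv.hasDerivAt x).add (k.deriv.hasDerivAt x)).deriv
  simp only [schr, e1, e2, Pi.add_apply]
  ring

theorem schr_smul {q φ : ℝ → ℝ} (c : ℝ) (h : IsTest φ) : schr q (c • φ) = c • schr q φ := by
  ext x
  have e1 : deriv (c • φ) = c • deriv φ := funext fun x => ((h.hasDerivAt x).const_smul c).deriv
  have e2 : deriv (c • deriv φ) x = c • deriv (deriv φ) x :=
    ((h.deriv.hasDerivAt x).const_smul c).deriv
  simp only [schr, e1, e2, Pi.smul_apply, smul_eq_mul]
  ring

/-- The inclusion of test functions into `L²(ℝ)`. -/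
def testToL2 : testSpace →ₗ[ℝ] L2R where
  toFun φ := φ.2.memLp.toLp φ.1
  map_add' φ ψ := φ.2.memLp.toLp_add ψ.2.memLp
  map_smul' c φ := φ.2.memLp.toLp_const_smul c

/-- The Schrödinger operator on test functions, with values in `L²(ℝ)`. -/
def schrToL2 (q : ℝ → ℝ) (hq : ContDiff ℝ (⊤ : ℕ∞) q) : testSpace →ₗ[ℝ] L2R where
  toFun φ := (φ.2.schr hq).memLp.toLp (schr q φ.1)
  map_add' φ ψ := by
    rw [← MemLp.toLp_add]
    congr 1
    exact schr_add φ.2 ψ.2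
  map_smul' c φ := by
    rw [RingHom.id_apply, ← MemLp.toLp_const_smul]
    congr 1
    exact schr_smul c φ.2

theorem inner_toLp (g : L2R) {f : ℝ → ℝ} (hf : MemLp f 2 (volume : Measure ℝ)) :
    inner ℝ g (hf.toLp f) = ∫ x, g x * f x := by
  rw [L2.inner_def]
  apply integral_congr_ae
  filter_upwards [hf.coeFn_toLp] with x hx
  rw [hx]
  simp [mul_comm]

theorem norm_sq_toLp {f : ℝ → ℝ} (hf : MemLp f 2 (volume : Measure ℝ)) :
    ‖hf.toLp f‖ ^ 2 = ∫ x, f x ^ 2 := by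
  rw [← real_inner_self_eq_norm_sq, inner_toLp]
  apply integral_congr_ae
  filter_upwards [hf.coeFn_toLp] with x hx
  rw [hx, sq]

theorem schr_symm {q : ℝ → ℝ} (hq : ContDiff ℝ (⊤ : ℕ∞) q) {φ ψ : ℝ → ℝ} (h : IsTest φ)
    (k : IsTest ψ) : ∫ x, φ x * schr q ψ x = ∫ x, schr q φ x * ψ x := by
  have i1 : Integrable fun x => φ x * schr q ψ x :=
    (h.1.continuous.mul (k.schr hq).1.continuous).integrable_of_hasCompactSupport h.2.mul_right
  have i2 : Integrable fun x => schr q φ x * ψ x :=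
    ((h.schr hq).1.continuous.mul k.1.continuous).integrable_of_hasCompactSupport k.2.mul_left
  have i3 : Integrable fun x => deriv φ x * ψ x - φ x * deriv ψ x :=
    ((h.deriv.1.continuous.mul k.1.continuous).sub
      (h.1.continuous.mul k.deriv.1.continuous)).integrable_of_hasCompactSupport
      (k.2.mul_left.sub h.2.mul_right)
  have := integral_eq_zero_of_hasDerivAt_of_integrable
    (f := fun x => deriv φ x * ψ x - φ x * deriv ψ x)
    (f' := fun x => φ x * schr q ψ x - schr q φ x * ψ x)
    (fun x => (((h.deriv.hasDerivAt x).mul (k.hasDerivAt x)).sub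
      ((h.hasDerivAt x).mul (k.deriv.hasDerivAt x))).congr_deriv (by simp only [schr]; ring))
    (i1.sub i2) i3
  rw [integral_sub i1 i2] at this
  linarith

theorem denseRange_schrToL2 {q : ℝ → ℝ} (hq : ContDiff ℝ (⊤ : ℕ∞) q) (D : Dichotomy q) :
    DenseRange (schrToL2 q hq) := by
  have : (LinearMap.range (schrToL2 q hq)).topologicalClosure = ⊤ := by
    rw [Submodule.topologicalClosure_eq_top_iff, Submodule.eq_bot_iff]
    intro g hg
    rw [Submodule.mem_orthogonal'] at hg
    rw [Lp.eq_zero_iff_ae_eq_zero]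
    refine ae_eq_zero_of_orthogonal hq D (Lp.memLp g) fun φ hφ => ?_
    rw [← inner_toLp g (hφ.schr hq).memLp]
    exact hg _ ⟨⟨φ, hφ⟩, rfl⟩
  rw [DenseRange, ← LinearMap.coe_range]
  exact (Submodule.dense_iff_topologicalClosure_eq_top).2 this

/-- An exponential dichotomy for `u'' = (V - E) u` puts `E` in the resolvent set. The resolvent
is the continuous extension of `schr φ ↦ φ`, which is bounded and densely defined. -/
theorem notMem_contSpectrum {V W : ℝ → ℝ} {E : ℝ} (hV : ContDiff ℝ (⊤ : ℕ∞) V)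
    (hVW : W =ᵐ[volume] V) (D : Dichotomy (fun x => V x - E)) : E ∉ ContSpectrum W := by
  have hq : ContDiff ℝ (⊤ : ℕ∞) (fun x => V x - E) := by fun_prop
  set q := fun x => V x - E with hqdef
  let ℒ := schrToL2 q hq
  let T : L2R →L[ℝ] L2R := testToL2.extendOfNorm ℒ
  have hdense : DenseRange ℒ := denseRange_schrToL2 hq D
  have hbound : ∃ C, ∀ φ, ‖testToL2 φ‖ ≤ C * ‖ℒ φ‖ := by
    refine ⟨2 * D.C ^ 2 / D.γ, fun φ => ?_⟩
    have hc := coercive hq D φ.2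
    rw [← norm_sq_toLp φ.2.memLp, ← norm_sq_toLp (φ.2.schr hq).memLp, ← mul_pow] at hc
    refine (sq_le_sq₀ (norm_nonneg _) ?_).1 hc
    have := D.γ_pos
    positivity
  have hT : ∀ φ, T (ℒ φ) = testToL2 φ := fun φ =>
    LinearMap.extendOfNorm_eq hdense hbound φ
  have hweak : ∀ g h : L2R, WeakSchrodingerEq W E g h ↔
      ∀ φ, inner ℝ g (ℒ φ) = inner ℝ h (testToL2 φ) := by
    intro g h
    have key : ∀ φ : testSpace, (∫ x, g x * (-(deriv (deriv φ.1) x) + (W x - E) * φ.1 x)) =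
        inner ℝ g (ℒ φ) := by
      intro φ
      refine Eq.trans ?_ (inner_toLp g (φ.2.schr hq).memLp).symm
      apply integral_congr_ae
      filter_upwards [hVW] with x hx
      rw [hx]; rfl
    have key2 : ∀ φ : testSpace, ∫ x, h x * φ.1 x = inner ℝ h (testToL2 φ) := fun φ =>
      (inner_toLp h φ.2.memLp).symm
    constructor
    · intro hw φ
      rw [← key, ← key2]
      exact hw φ.1 φ.2.1 φ.2.2
    · intro hw φ h1 h2
      exact (key ⟨φ, h1, h2⟩).trans ((hw _).trans (key2 ⟨φ, h1, h2⟩).symm)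
  have hsymm : ∀ φ ψ, inner ℝ (testToL2 φ) (ℒ ψ) = inner ℝ (ℒ φ) (testToL2 ψ) := by
    intro φ ψ
    have e1 : inner ℝ (testToL2 φ) (ℒ ψ) = ∫ x, φ.1 x * schr q ψ.1 x := by
      refine (inner_toLp _ (ψ.2.schr hq).memLp).trans (integral_congr_ae ?_)
      filter_upwards [φ.2.memLp.coeFn_toLp] with x hx
      exact congrArg (· * _) hx
    have e2 : inner ℝ (ℒ φ) (testToL2 ψ) = ∫ x, schr q φ.1 x * ψ.1 x := by
      refine (inner_toLp _ ψ.2.memLp).trans (integral_congr_ae ?_)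
      filter_upwards [(φ.2.schr hq).memLp.coeFn_toLp] with x hx
      exact congrArg (· * _) hx
    rw [e1, e2, schr_symm hq φ.2 ψ.2]
  have hTweak : ∀ (f : L2R) φ, inner ℝ (T f) (ℒ φ) = inner ℝ f (testToL2 φ) := by
    intro f φ
    refine hdense.induction_on (p := fun f => inner ℝ (T f) (ℒ φ) = inner ℝ f (testToL2 φ)) f ?_ ?_
    · exact isClosed_eq (by fun_prop) (by fun_prop)
    · intro ψ
      rw [hT, hsymm]
  refine not_not.2 ?_
  refine ⟨T, fun f => (hweak _ _).2 (hTweak f), fun g h hgh => ?_⟩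
  rw [hweak] at hgh
  refine hdense.eq_of_inner_left (𝕜 := ℝ) fun φ => ?_
  rw [hTweak, hgh]

/-! ### Square-integrable functions on an interval -/

/-- The space of smooth functions whose support is a compact subset of `(0, a)`. -/
def interiorTestSpace (a : ℝ) : Submodule ℝ (ℝ → ℝ) where
  carrier := {φ | ContDiff ℝ (⊤ : ℕ∞) φ ∧ tsupport φ ⊆ Ioo 0 a}
  add_mem' h k := ⟨h.1.add k.1, (tsupport_add _ _).trans (union_subset h.2 k.2)⟩
  zero_mem' := ⟨contDiff_const, by simp [tsupport]⟩
  smul_mem' c f h := ⟨contDiff_const.smul h.1, (tsupport_smul_subset_right (fun _ => c) f).trans h.2⟩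

theorem hasCompactSupport_of_tsupport_subset {a : ℝ} {φ : ℝ → ℝ} (h : tsupport φ ⊆ Ioo 0 a) :
    HasCompactSupport φ :=
  isCompact_Icc.of_isClosed_subset (isClosed_tsupport φ) (h.trans Ioo_subset_Icc_self)

theorem interiorTest_memLp {a : ℝ} {φ : ℝ → ℝ} (h : ContDiff ℝ (⊤ : ℕ∞) φ)
    (hs : tsupport φ ⊆ Ioo 0 a) : MemLp φ 2 (volume.restrict (Ico (0 : ℝ) a)) :=
  (h.continuous.memLp_of_hasCompactSupport (hasCompactSupport_of_tsupport_subset hs)).restrict _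

/-- The inclusion of `interiorTestSpace a` into `L²([0,a))`. -/
def interiorToL2 (a : ℝ) : interiorTestSpace a →ₗ[ℝ] L2I a where
  toFun φ := (interiorTest_memLp φ.2.1 φ.2.2).toLp φ.1
  map_add' _ _ := MemLp.toLp_add _ _
  map_smul' c _ := MemLp.toLp_const_smul c _

theorem denseRange_interiorToL2 (a : ℝ) : DenseRange (interiorToL2 a) := by
  have : (LinearMap.range (interiorToL2 a)).topologicalClosure = ⊤ := by
    rw [Submodule.topologicalClosure_eq_top_iff, Submodule.eq_bot_iff]
    intro g hg
    rw [Submodule.mem_orthogonal'] at hg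
    rw [Lp.eq_zero_iff_ae_eq_zero]
    have hint : IntegrableOn g (Ico 0 a) := (Lp.memLp g).integrable (by norm_num)
    have h0 : ∀ᵐ x : ℝ, x ∈ Ioo 0 a → g x = 0 := by
      refine isOpen_Ioo.ae_eq_zero_of_integral_contDiff_smul_eq_zero
        (hint.mono_set Ioo_subset_Ico_self).locallyIntegrableOn fun φ h1 _ h3 => ?_
      have h4 := hg _ ⟨⟨φ, h1, h3⟩, rfl⟩
      rw [L2.inner_def] at h4
      rw [← setIntegral_eq_integral_of_forall_compl_eq_zero (s := Ico 0 a)]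
      · refine Eq.trans ?_ h4
        apply integral_congr_ae
        filter_upwards [(interiorTest_memLp h1 h3).coeFn_toLp] with x hx
        rw [show (interiorToL2 a ⟨φ, h1, h3⟩ : ℝ → ℝ) x = φ x from hx]
        simp
      · intro x hx
        rw [eq_zero_of_notMem_Ioo h3 fun h => hx (Ioo_subset_Ico_self h), zero_smul]
    refine (ae_restrict_iff' measurableSet_Ico).2 ?_
    filter_upwards [h0, Measure.ae_ne volume (0 : ℝ)] with x hx hx0 hxa
    exact hx ⟨hxa.1.lt_of_ne' hx0, hxa.2⟩
  rw [DenseRange, ← LinearMap.coe_range]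
  exact (Submodule.dense_iff_topologicalClosure_eq_top).2 this

theorem exists_smooth_approx {a : ℝ} (φ : L2I a) {δ : ℝ} (hδ : 0 < δ) :
    ∃ ψ, ∃ (h : ContDiff ℝ (⊤ : ℕ∞) ψ) (hs : tsupport ψ ⊆ Ioo 0 a),
      dist φ ((interiorTest_memLp h hs).toLp ψ) < δ := by
  obtain ⟨ψ, hψ⟩ := (denseRange_interiorToL2 a).exists_dist_lt φ hδ
  exact ⟨ψ.1, ψ.2.1, ψ.2.2, hψ⟩

theorem dist_sq_L2I {b : ℝ} (hb : 0 ≤ b) (f g : L2I b) :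
    dist f g ^ 2 = ∫ t in 0..b, (f t - g t) ^ 2 := by
  rw [intervalIntegral.integral_of_le hb, ← integral_Ico_eq_integral_Ioc, dist_eq_norm,
    ← real_inner_self_eq_norm_sq, L2.inner_def]
  apply integral_congr_ae
  filter_upwards [Lp.coeFn_sub f g] with x hx
  rw [hx]
  simp [sq]

theorem intervalIntegrable_sq_sub {b : ℝ} (hb : 0 ≤ b) (f g : L2I b) :
    IntervalIntegrable (fun t => (f t - g t) ^ 2) volume 0 b := by
  rw [intervalIntegrable_iff_integrableOn_Ico_of_le hb]
  exact ((Lp.memLp f).sub (Lp.memLp g)).integrable_sq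

theorem ae_Ioc_of_ae_Ico {a : ℝ} {p : ℝ → Prop}
    (h : ∀ᵐ t ∂(volume.restrict (Ico (0 : ℝ) a)), p t) :
    ∀ᵐ t ∂(volume.restrict (Ioc (0 : ℝ) a)), p t := by
  rwa [← restrict_Ico_eq_restrict_Ioc]

/-- Concatenating `n` copies multiplies the `L²` distance by `√n`. -/
theorem dist_sq_repeat {a : ℝ} (ha : 0 < a) {n : ℕ} {x y : L2I (n * a)} {φ ψ : L2I a}
    (hx : ∀ j : ℕ, j < n → ∀ᵐ t ∂(volume.restrict (Ico (0 : ℝ) a)), x (t + j * a) = φ t)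
    (hy : ∀ j : ℕ, j < n → ∀ᵐ t ∂(volume.restrict (Ico (0 : ℝ) a)), y (t + j * a) = ψ t) :
    dist x y ^ 2 = n * dist φ ψ ^ 2 := by
  have hna : 0 ≤ n * a := by positivity
  have key := intervalIntegral.sum_integral_adjacent_intervals (μ := volume)
    (f := fun t => (x t - y t) ^ 2) (a := fun j : ℕ => (j : ℝ) * a) (n := n) (fun j hj => by
      refine (intervalIntegrable_sq_sub hna x y).mono_set ?_
      have hj' : (j : ℝ) + 1 ≤ n := by exact_mod_cast hj
      rw [uIcc_of_le hna, uIcc_of_le (by gcongr; simp)]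
      refine Icc_subset_Icc (by positivity) ?_
      push_cast
      gcongr)
  rw [dist_sq_L2I hna]
  rw [Nat.cast_zero, zero_mul] at key
  rw [← key, Finset.sum_congr rfl (g := fun _ => dist φ ψ ^ 2)]
  · simp
  intro j hj
  rw [Finset.mem_range] at hj
  have e : ((j + 1 : ℕ) : ℝ) * a = a + j * a := by push_cast; ring
  have e0 : (j : ℝ) * a = 0 + j * a := by ring
  rw [e, dist_sq_L2I ha.le]
  nth_rewrite 1 [e0]
  rw [← intervalIntegral.integral_comp_add_right (fun t => (x t - y t) ^ 2)]
  rw [intervalIntegral.integral_of_le ha.le, intervalIntegral.integral_of_le ha.le]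
  apply integral_congr_ae
  filter_upwards [ae_Ioc_of_ae_Ico (hx j hj), ae_Ioc_of_ae_Ico (hy j hj)] with t h1 h2
  rw [h1, h2]

theorem dist_toLp_le {a ε : ℝ} (ha : 0 ≤ a) (hε : 0 ≤ ε) {φ ψ : ℝ → ℝ}
    (hφ : MemLp φ 2 (volume.restrict (Ico (0 : ℝ) a)))
    (hψ : MemLp ψ 2 (volume.restrict (Ico (0 : ℝ) a))) (h : ∀ x, |φ x - ψ x| ≤ ε) :
    dist (hφ.toLp φ) (hψ.toLp ψ) ≤ ε * √a := by
  refine (sq_le_sq₀ dist_nonneg (by positivity)).1 ?_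
  rw [mul_pow, Real.sq_sqrt ha, dist_sq_L2I ha, intervalIntegral.integral_of_le ha,
    ← integral_Ico_eq_integral_Ioc]
  have hle : ∫ t in Ico 0 a, (hφ.toLp φ t - hψ.toLp ψ t) ^ 2 ≤ ∫ t in Ico 0 a, ε ^ 2 := by
    refine integral_mono_ae ((Lp.memLp _).sub (Lp.memLp _)).integrable_sq
      (integrable_const _) ?_
    filter_upwards [hφ.coeFn_toLp, hψ.coeFn_toLp] with t h1 h2
    rw [h1, h2, ← sq_abs]
    gcongr
    exact h t
  refine hle.trans (le_of_eq ?_)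
  simp [ha, mul_comm]

/-! ### Repeated blocks -/

theorem glue_const_memLp {a : ℝ} (ha : 0 < a) (n : ℕ) {ψ : ℝ → ℝ} (h : ContDiff ℝ (⊤ : ℕ∞) ψ)
    (hs : tsupport ψ ⊆ Ioo 0 a) :
    MemLp (glue a fun _ => ψ) 2 (volume.restrict (Ico (0 : ℝ) (n * a))) := by
  have hc := (glue_contDiff ha (fun _ => hs) (fun _ => h)).continuous
  obtain ⟨K, hK⟩ := h.continuous.bounded_above_of_compact_support
    (hasCompactSupport_of_tsupport_subset hs)
  exact MemLp.of_bound hc.aestronglyMeasurable K (Filter.Eventually.of_forall fun t => hK _)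

/-- The `n`-fold concatenation `ψ^{♯n}` of a smooth block `ψ`. -/
def repBlock {a : ℝ} (ha : 0 < a) (n : ℕ) {ψ : ℝ → ℝ} (h : ContDiff ℝ (⊤ : ℕ∞) ψ)
    (hs : tsupport ψ ⊆ Ioo 0 a) : L2I (n * a) :=
  (glue_const_memLp ha n h hs).toLp _

/-- The translated form is the one needed on each block of a concatenation; `c = 0` says that
`repBlock` is represented by `glue`. -/
theorem repBlock_ae {a : ℝ} (ha : 0 < a) (n : ℕ) {ψ : ℝ → ℝ} (h : ContDiff ℝ (⊤ : ℕ∞) ψ)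
    (hs : tsupport ψ ⊆ Ioo 0 a) (c : ℝ) :
    ∀ᵐ t : ℝ, t + c ∈ Ico 0 (n * a) → repBlock ha n h hs (t + c) = glue a (fun _ => ψ) (t + c) := by
  have h1 := (glue_const_memLp ha n h hs).coeFn_toLp
  rw [Filter.EventuallyEq, ae_restrict_iff' measurableSet_Ico] at h1
  exact (measurePreserving_add_right volume c).quasiMeasurePreserving.ae h1

theorem repBlock_apply {a : ℝ} (ha : 0 < a) (n : ℕ) {ψ : ℝ → ℝ} (h : ContDiff ℝ (⊤ : ℕ∞) ψ)
    (hs : tsupport ψ ⊆ Ioo 0 a) (j : ℕ) (hj : j < n) :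
    ∀ᵐ t ∂(volume.restrict (Ico (0 : ℝ) a)),
      repBlock ha n h hs (t + j * a) = (interiorTest_memLp h hs).toLp ψ t := by
  filter_upwards [(interiorTest_memLp h hs).coeFn_toLp, ae_restrict_mem measurableSet_Ico,
    ae_restrict_of_ae (repBlock_ae ha n h hs (j * a))] with t h1 h2 h3
  have hj' : (j : ℝ) + 1 ≤ n := by exact_mod_cast hj
  have := glue_apply_Ico ha (fun _ => ψ) j h2
  push_cast at this
  rw [h1, h3 ⟨by have := h2.1; positivity, by nlinarith [h2.2]⟩, add_comm, this]

/-- The concatenation of the blocks `(Q k)^{♯n}` is the smooth potential that glues pieces of length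
`a`, the `k`-th piece being `Q (k / n)` with integer division. -/
theorem aggC_ae_eq_glue {a : ℝ} (ha : 0 < a) {n : ℕ} (hn : 0 < n) (y : ℤ → L2I (n * a))
    (Q : ℤ → ℝ → ℝ) (hQ : ∀ k, ContDiff ℝ (⊤ : ℕ∞) (Q k)) (hs : ∀ k, tsupport (Q k) ⊆ Ioo 0 a)
    (hy : ∀ k, y k = repBlock ha n (hQ k) (hs k)) :
    aggC (n * a) y =ᵐ[volume] glue a fun k => Q (k / n) := by
  have hna : 0 < n * a := by positivity
  filter_upwards [ae_all_iff.2 fun k : ℤ => repBlock_ae ha n (hQ k) (hs k) (-(k * (n * a)))]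
    with t ht
  set k := ⌊t / (n * a)⌋ with hk
  have h1 : k * (n * a) ≤ t := by rw [← le_div_iff₀ hna]; exact Int.floor_le _
  have h2 : t < (k + 1) * (n * a) := by rw [← div_lt_iff₀ hna]; exact Int.lt_floor_add_one _
  have h3 := ht k ⟨by linarith, by linarith⟩
  have h4 : ⌊t / a⌋ / (n : ℤ) = k := by
    rw [← Int.floor_div_natCast, div_div, mul_comm a]
  have h5 : ⌊(t + -(k * (n * a))) / a⌋ = ⌊t / a⌋ - k * n := by
    rw [show (t + -(k * (n * a))) / a = t / a - ((k * n : ℤ) : ℝ) by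
      push_cast; field_simp; ring, Int.floor_sub_intCast]
  unfold aggC glue
  beta_reduce
  rw [← hk, hy, h4, sub_eq_add_neg, h3, glue, h5]
  congr 1
  push_cast; ring

/-- Fix `a > 0` and `n ∈ ℕ`. The set `{φ^{♯n} : φ ∈ L²([0,a))} ⊆ L²([0,na))`
is gap-rich with empty exceptional set. -/
theorem repeat_word_gapRich (a : ℝ) (ha : 0 < a) (n : ℕ) (hn : 0 < n) :
    GapRichC (n * a) (repeatSet a n) (∅ : Set ℝ) := by
  refine ⟨fun x h => ?_, fun E _ m hm x hx ε hε => ?_⟩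
  · simp [AccPt, Filter.neBot_iff] at h
  choose φ hφ using hx
  -- `δ` is the `L²([0,a))` accuracy that yields accuracy `ε` after `n`-fold concatenation
  set δ := ε / √n with hδ_def
  have hn' : (0 : ℝ) < n := by exact_mod_cast hn
  have hδ : 0 < δ := by positivity
  choose ψ₀ hψ₀ hs₀ hd₀ using fun i => exists_smooth_approx (φ i) (half_pos hδ)
  obtain ⟨K, hK, ψ, B, hψ, hs, hclose, hB, htr⟩ := exists_hyperbolic_word E a ha n hn m hm
    (fun i => ψ₀ ⟨i % m, Nat.mod_lt _ hm⟩) (fun i => hψ₀ _) (fun i => hs₀ _)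
    (δ / 2 / √a) (by positivity)
  have hl : 0 < m * K := Nat.mul_pos hm hK
  set l := m * K with hl_def
  refine ⟨l, hl, fun i => repBlock ha n (hψ i) (hs i), fun i => ?_, fun j => ?_, ?_⟩
  · exact ⟨_, repBlock_apply ha n (hψ i) (hs i)⟩
  · simp only [perExt, hm, hl, dif_pos]
    set i := (j % (l : ℤ)).toNat with hi
    have hmod : (j % (m : ℤ)).toNat = i % m % m := by
      have h1 : 0 ≤ j % (l : ℤ) := Int.emod_nonneg _ (by positivity)
      rw [Nat.mod_mod]
      zify
      rw [Int.toNat_of_nonneg (Int.emod_nonneg _ (by positivity)), hi, Int.toNat_of_nonneg h1,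
        Int.emod_emod_of_dvd _ ⟨K, by rw [hl_def]; push_cast; ring⟩]
    have h1 := dist_sq_repeat ha (hφ ⟨i % m % m, Nat.mod_lt _ hm⟩)
      (repBlock_apply ha n (hψ i) (hs i))
    have h2 := dist_toLp_le ha.le (ε := δ / 2 / √a) (by positivity)
      (interiorTest_memLp (hψ₀ ⟨i % m % m, Nat.mod_lt _ hm⟩) (hs₀ _))
      (interiorTest_memLp (hψ i) (hs i)) fun t => by rw [abs_sub_comm]; exact hclose i t
    rw [div_mul_cancel₀ _ (by positivity)] at h2
    have h3 := (dist_triangle _ _ _).trans_lt (add_lt_add_of_lt_of_le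
      (hd₀ ⟨i % m % m, Nat.mod_lt _ hm⟩) h2)
    rw [add_halves] at h3
    have h4 : dist (x ⟨i % m % m, Nat.mod_lt _ hm⟩) (repBlock ha n (hψ i) (hs i)) ^ 2 < ε ^ 2 := by
      rw [h1, show ε ^ 2 = n * δ ^ 2 by rw [hδ_def, div_pow, Real.sq_sqrt hn'.le]; field_simp]
      gcongr
    have h5 := lt_of_pow_lt_pow_left₀ 2 hε.le h4
    simpa only [hmod] using h5
  · let Q : ℤ → ℝ → ℝ := fun k => ψ (k % (l : ℤ)).toNat
    let P : ℤ → ℝ → ℝ := fun k => Q (k / n)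
    have hPs : ∀ k, tsupport (P k) ⊆ Ioo 0 a := fun k => hs _
    have hPc : ∀ k, ContDiff ℝ (⊤ : ℕ∞) (P k) := fun k => hψ _
    have hper : Function.Periodic (glue a P) ((n * l : ℕ) * a) := by
      refine glue_periodic ha _ fun k => ?_
      simp only [P, Q]
      rw [Nat.cast_mul, Int.add_mul_ediv_left _ _ (by positivity), Int.add_emod_right]
    have hL : (0 : ℝ) < (n * l : ℕ) * a := by
      have : 0 < n * l := Nat.mul_pos hn hl
      positivity
    have hV := glue_contDiff ha hPs hPc
    obtain ⟨C, hC⟩ := isBounded_iff_forall_norm_le.1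
      (hper.isBounded_of_continuous hL.ne' hV.continuous)
    have hM := glue_isTransfer ha hPs hPc C (fun t => hC _ ⟨t, rfl⟩) E
      (fun k => B (k / n % l)) (fun k => by
        have : ((k : ℤ) / n % l).toNat = k / n % l := by norm_cast
        simp only [P, Q, this]
        exact hB _) (n * l)
    have hcoc : cocycle (fun k => B (k / n % l)) (n * l) = cocycle (fun j => B j ^ n) l := by
      rw [cocycle_mul]
      refine cocycle_congr fun i hi => ?_
      rw [← cocycle_const]
      refine cocycle_congr fun r hr => ?_
      rw [Nat.mul_add_div hn, Nat.div_eq_of_lt hr, add_zero, Nat.mod_eq_of_lt hi]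
    rw [hcoc] at hM
    obtain ⟨D⟩ := exists_dichotomy hL (fun t => by rw [hper t]) hM htr
    refine notMem_contSpectrum hV ?_ D
    refine aggC_ae_eq_glue ha hn _ Q (fun k => hψ _) (fun k => hs _) fun k => ?_
    simp only [perExt, hl, dif_pos, Q]
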